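/- arXiv:quant-ph/0606225 — 3 statements merged into one kernel-verified Lean document; each statement's English description precedes it below -/
import Mathlib

section
/- Let A = A₁⊗A₂, B and R be finite-dimensional complex Hilbert spaces and let ψ^{RAB} be a pure state on R⊗A⊗B. Then there exist a unitary operator U on A, a Hilbert space B̃ with d_{B̃} = d_{A₂}, and an isometry V : A₁⊗B → (A⊗B)⊗B̃ such that, after reordering tensor factors, ‖ (I_R⊗V)(I_{RB}⊗U) ψ^{RAB} (I_{RB}⊗U)†(I_R⊗V)† − ψ^{R(AB)} ⊗ Φ^{A₂B̃} ‖₁ ≤ 2[ (2 d_A d_R / d_{A₁}²) ( Tr[(ψ^{AR})²] + 2 Tr[(ψ^A)²] Tr[(ψ^R)²] ) ]^{1/4}, where ψ^{R(AB)} denotes the original pure state ψ^{RAB} regarded as a state on R tensored with the single system A⊗B (a purification of ψ^R). -/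
open Matrix
open scoped Kronecker ComplexOrder

open scoped MatrixOrder in
/-- Trace norm `‖M‖₁ = Tr √(Mᴴ M)` of a complex square matrix. -/
noncomputable def traceNorm {n : Type*} [Fintype n] [DecidableEq n] (M : Matrix n n ℂ) : ℝ :=
  ((CFC.sqrt (Mᴴ * M)).trace).re

/-- The unit vector `d^{-1/2} ∑ᵢ |i⟩|i⟩` of the maximally entangled state on `X ⊗ X'`
(with `X' ≅ X`). -/
noncomputable def maxEntVec (α : Type*) [Fintype α] [DecidableEq α] : α × α → ℂ :=
  fun p => if p.1 = p.2 then ((Real.sqrt (Fintype.card α) : ℂ))⁻¹ else 0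

/-- The maximally entangled (pure) state `Φ^{XX'}` on `X ⊗ X'`. -/
noncomputable def maxEntState (α : Type*) [Fintype α] [DecidableEq α] :
    Matrix (α × α) (α × α) ℂ :=
  Matrix.vecMulVec (maxEntVec α) (star (maxEntVec α))

/-- The pure state `|v⟩⟨v|` associated to a vector `v`. -/
noncomputable def pureState {ι : Type*} (v : ι → ℂ) : Matrix ι ι ℂ :=
  Matrix.vecMulVec v (star v)

/-- Reduced state `ψ^{AR}` of a pure state on `R ⊗ (A × B)`; the partial trace over `B`. -/
noncomputable def redAR {ιR ιA ιB : Type} [Fintype ιB]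
    (ψ : ιR × (ιA × ιB) → ℂ) : Matrix (ιA × ιR) (ιA × ιR) ℂ :=
  Matrix.of fun i j => ∑ b : ιB, ψ (i.2, (i.1, b)) * star (ψ (j.2, (j.1, b)))

/-- Reduced state `ψ^{A}` of a pure state on `R ⊗ (A × B)`. -/
noncomputable def redA {ιR ιA ιB : Type} [Fintype ιR] [Fintype ιB]
    (ψ : ιR × (ιA × ιB) → ℂ) : Matrix ιA ιA ℂ :=
  Matrix.of fun i j => ∑ r : ιR, ∑ b : ιB, ψ (r, (i, b)) * star (ψ (r, (j, b)))

/-- Reduced state `ψ^{R}` of a pure state on `R ⊗ (A × B)`. -/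
noncomputable def redR {ιR ιA ιB : Type} [Fintype ιA] [Fintype ιB]
    (ψ : ιR × (ιA × ιB) → ℂ) : Matrix ιR ιR ℂ :=
  Matrix.of fun i j => ∑ q : ιA × ιB, ψ (i, q) * star (ψ (j, q))

/-- Purity `Tr[ρ²]` of a state, as a real number. -/
noncomputable def purity {ι : Type*} [Fintype ι] (ρ : Matrix ι ι ℂ) : ℝ :=
  (ρ * ρ).trace.re

/-- The combined isometry of the FQSW protocol: first `I_{RB} ⊗ U` (with `U : A → A₁A₂`),
then `I_{R A₂} ⊗ V` (with `V : A₁ ⊗ B → (A⊗B) ⊗ B̃` and `B̃` a copy of `A₂`), with the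
output tensor factors reordered as `(R × (A × B)) × (A₂ × B̃)`. -/
noncomputable def fqswMap {ιR ιA₁ ιA₂ ιB : Type} [Fintype ιA₁] [DecidableEq ιR]
    (U : Matrix (ιA₁ × ιA₂) (ιA₁ × ιA₂) ℂ)
    (V : Matrix (((ιA₁ × ιA₂) × ιB) × ιA₂) (ιA₁ × ιB) ℂ) :
    Matrix ((ιR × ((ιA₁ × ιA₂) × ιB)) × (ιA₂ × ιA₂)) (ιR × ((ιA₁ × ιA₂) × ιB)) ℂ :=
  Matrix.of fun p q =>
    if p.1.1 = q.1 then
      ∑ a₁ : ιA₁, V (p.1.2, p.2.2) (a₁, q.2.2) * U (a₁, p.2.1) q.2.1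
    else 0

/-! Alice's unitary is chosen by averaging over a finite set of unitaries instead of the Haar
measure. A flat unitary composed with random phases first makes the diagonal blocks of `ψ^{AR}`
small. Random permutations of a basis of `A` followed by random phases then bring the mean
purity of `ψ^{A₂R}` down to at most `Tr[(ψ^R)²] / d_{A₂} + Tr[(ψ^{AR})²] / d_{A₁}`, so that for
some unitary the state of `A₂R` is within `Tr[(ψ^{AR})²] / d_{A₁}` of `1/d_{A₂} ⊗ ψ^R` in
squared Hilbert–Schmidt norm. The latter state is purified by `ψ ⊗ Φ`. Uhlmann's theorem turns
the proximity of the two reduced states into an isometry on the purifying systems with large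
overlap, the loss being controlled by the Powers–Størmer inequality. Two pure states with large
overlap are close in trace norm. -/

section MatrixAnalysis

variable {m n : Type*} [Fintype m] [Fintype n]

lemma re_trace_nonneg {A : Matrix n n ℂ} (hA : A.PosSemidef) : 0 ≤ A.trace.re :=
  (Complex.le_def.1 hA.trace_nonneg).1

open scoped MatrixOrder in
lemma re_trace_mul_nonneg {A B : Matrix n n ℂ} (hA : A.PosSemidef) (hB : B.PosSemidef) :
    0 ≤ (A * B).trace.re := by
  classical
  obtain ⟨R, rfl⟩ : ∃ R, A = star R * R :=
    CStarAlgebra.nonneg_iff_eq_star_mul_self.mp hA.nonneg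
  rw [star_eq_conjTranspose, Matrix.mul_assoc, trace_mul_comm]
  exact re_trace_nonneg (hB.mul_mul_conjTranspose_same R)

lemma re_trace_conjTranspose_mul_le (A B : Matrix m n ℂ) :
    (Aᴴ * B).trace.re ≤ √(Aᴴ * A).trace.re * √(Bᴴ * B).trace.re := by
  have inner_vec (C D : Matrix m n ℂ) :
      inner ℂ (WithLp.toLp 2 C.vec) (WithLp.toLp 2 D.vec) = (Cᴴ * D).trace := by
    rw [EuclideanSpace.inner_eq_star_dotProduct, dotProduct_comm, star_vec_dotProduct_vec]
  have norm_vec (C : Matrix m n ℂ) : ‖WithLp.toLp 2 C.vec‖ = √(Cᴴ * C).trace.re := by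
    rw [norm_eq_sqrt_re_inner (𝕜 := ℂ), inner_vec, RCLike.re_eq_complex_re]
  rw [← norm_vec, ← norm_vec, ← inner_vec]
  exact re_inner_le_norm (𝕜 := ℂ) _ _

lemma trace_pureState_mul_pureState (u v : n → ℂ) :
    (pureState u * pureState v).trace.re = ‖star v ⬝ᵥ u‖ ^ 2 := by
  have hconj : star u ⬝ᵥ v = star (star v ⬝ᵥ u) := by rw [star_dotProduct]
  rw [pureState, pureState, vecMulVec_mul_vecMulVec, trace_vecMulVec, dotProduct_smul,
    dotProduct_comm u, hconj, smul_eq_mul, Complex.star_def, Complex.conj_mul']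
  norm_cast

lemma isHermitian_pureState {ι : Type*} (v : ι → ℂ) : (pureState v).IsHermitian := by
  rw [IsHermitian, pureState, conjTranspose_vecMulVec, star_star]

variable [DecidableEq n]

lemma trace_mul_self_eq_sum_eigenvalues_sq {A : Matrix n n ℂ} (hA : A.IsHermitian) :
    (A * A).trace.re = ∑ i, hA.eigenvalues i ^ 2 := by
  set U := hA.eigenvectorUnitary
  have hU : star (U : Matrix n n ℂ) * U = 1 := Unitary.coe_star_mul_self U
  have hAA : A * A =
      U * diagonal (fun i ↦ ((hA.eigenvalues i ^ 2 : ℝ) : ℂ)) * star (U : Matrix n n ℂ) := by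
    conv_lhs => rw [hA.spectral_theorem, ← map_mul, diagonal_mul_diagonal,
      Unitary.conjStarAlgAut_apply]
    simp [U, pow_two]
  rw [hAA, trace_mul_cycle, hU, Matrix.one_mul, trace_diagonal, ← Complex.ofReal_sum,
    Complex.ofReal_re]

open scoped MatrixOrder in
lemma traceNorm_le_sqrt_rank_mul (M : Matrix n n ℂ) :
    traceNorm M ≤ √(M.rank * (Mᴴ * M).trace.re) := by
  set S := CFC.sqrt (Mᴴ * M) with hS_def
  have hSS : S * S = Mᴴ * M :=
    CFC.sqrt_mul_sqrt_self _ (posSemidef_conjTranspose_mul_self M).nonneg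
  have hS : S.IsHermitian := (CFC.sqrt_nonneg (Mᴴ * M)).posSemidef.isHermitian
  have hrank : M.rank = Fintype.card {i // hS.eigenvalues i ≠ 0} := by
    rw [← hS.rank_eq_card_non_zero_eigs, ← rank_conjTranspose_mul_self S, hS.eq, hSS,
      rank_conjTranspose_mul_self]
  have htrace : traceNorm M = ∑ i with hS.eigenvalues i ≠ 0, hS.eigenvalues i := by
    rw [traceNorm, ← hS_def, hS.trace_eq_sum_eigenvalues, Complex.re_sum, Finset.sum_filter_ne_zero]
    rfl
  apply Real.le_sqrt_of_sq_le
  calc traceNorm M ^ 2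
      ≤ M.rank * ∑ i with hS.eigenvalues i ≠ 0, hS.eigenvalues i ^ 2 := by
        rw [htrace, hrank, Fintype.card_subtype]
        exact sq_sum_le_card_mul_sum_sq
    _ ≤ M.rank * ∑ i, hS.eigenvalues i ^ 2 := by
        gcongr
        exact Finset.subset_univ _
    _ = M.rank * (Mᴴ * M).trace.re := by
        rw [← trace_mul_self_eq_sum_eigenvalues_sq, hSS]

lemma traceNorm_pureState_sub_le {u v : n → ℂ} (hu : star u ⬝ᵥ u = 1) (hv : star v ⬝ᵥ v = 1) :
    traceNorm (pureState u - pureState v) ≤ 2 * √(1 - ‖star v ⬝ᵥ u‖ ^ 2) := by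
  set D := pureState u - pureState v with hD
  have hrank : D.rank ≤ 2 := by
    have hfactor : D = (of ![u, v])ᵀ * of ![star u, -star v] := by
      ext i j
      simp [hD, pureState, vecMulVec_apply, Matrix.mul_apply, sub_eq_add_neg]
    calc D.rank ≤ (of ![star u, -star v]).rank := hfactor ▸ rank_mul_le_right _ _
      _ ≤ 2 := rank_le_card_height _
  have hpurity : (Dᴴ * D).trace.re = 2 * (1 - ‖star v ⬝ᵥ u‖ ^ 2) := by
    rw [((isHermitian_pureState u).sub (isHermitian_pureState v)).eq]
    simp only [D, Matrix.sub_mul, Matrix.mul_sub, trace_sub, Complex.sub_re]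
    rw [trace_mul_comm (pureState v) (pureState u)]
    simp only [trace_pureState_mul_pureState, hu, hv, norm_one]
    ring
  calc traceNorm D ≤ √(D.rank * (Dᴴ * D).trace.re) := traceNorm_le_sqrt_rank_mul D
    _ ≤ √(2 * (2 * (1 - ‖star v ⬝ᵥ u‖ ^ 2))) := by
        rw [← hpurity]
        have := re_trace_nonneg (posSemidef_conjTranspose_mul_self D)
        gcongr
        exact_mod_cast hrank
    _ = 2 * √(1 - ‖star v ⬝ᵥ u‖ ^ 2) := by
        rw [← mul_assoc, Real.sqrt_mul (by norm_num), ← sq, Real.sqrt_sq (by norm_num)]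

end MatrixAnalysis

section Polar

lemma exists_orthonormal_eq_norm_smul {𝕜 E ι : Type*} [RCLike 𝕜] [NormedAddCommGroup E]
    [InnerProductSpace 𝕜 E] [FiniteDimensional 𝕜 E] [Fintype ι] {v : ι → E}
    (hv : Pairwise fun i j ↦ inner 𝕜 (v i) (v j) = 0)
    (hcard : Fintype.card ι ≤ Module.finrank 𝕜 E) :
    ∃ u : ι → E, Orthonormal 𝕜 u ∧ ∀ i, v i = (‖v i‖ : 𝕜) • u i := by
  obtain ⟨e⟩ : Nonempty (ι ↪ Fin (Module.finrank 𝕜 E)) :=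
    Function.Embedding.nonempty_of_card_le (by simpa using hcard)
  let w : Fin (Module.finrank 𝕜 E) → E := Function.extend e (fun i ↦ (‖v i‖⁻¹ : 𝕜) • v i) 0
  have hw (i : ι) : w (e i) = (‖v i‖⁻¹ : 𝕜) • v i := e.injective.extend_apply _ _ _
  have horth : Orthonormal 𝕜 ((e '' {i | v i ≠ 0}).domRestrict w) := by
    constructor
    · rintro ⟨_, i, hi, rfl⟩
      have : ‖v i‖ ≠ 0 := norm_ne_zero_iff.mpr hi
      simp [hw, norm_smul, this]
    · rintro ⟨_, i, hi, rfl⟩ ⟨_, j, hj, rfl⟩ hij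
      have hij' : i ≠ j := fun h ↦ hij (by simp [h])
      simp [hw, inner_smul_left, inner_smul_right, hv hij']
  obtain ⟨b, hb⟩ := horth.exists_orthonormalBasis_extension_of_card_eq (by simp)
  refine ⟨b ∘ e, b.orthonormal.comp e e.injective, fun i ↦ ?_⟩
  by_cases hi : v i = 0
  · simp [hi]
  · have : (‖v i‖ : 𝕜) ≠ 0 := by simpa using hi
    rw [Function.comp_apply, hb (e i) ⟨i, hi, rfl⟩, hw, smul_inv_smul₀ this]

theorem exists_isometry_mul_posSemidef {m n : Type*} [Fintype m] [DecidableEq m] [Fintype n]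
    (Z : Matrix n m ℂ) (hcard : Fintype.card m ≤ Fintype.card n) :
    ∃ (K : Matrix n m ℂ) (S : Matrix m m ℂ), Kᴴ * K = 1 ∧ S.PosSemidef ∧ Z = K * S := by
  have hZ : (Zᴴ * Z).IsHermitian := isHermitian_conjTranspose_mul_self Z
  let W : Matrix m m ℂ := hZ.eigenvectorUnitary
  have hWW : Wᴴ * W = 1 := Unitary.coe_star_mul_self _
  have hWW' : W * Wᴴ = 1 := Unitary.coe_mul_star_self _
  let v (i : m) : EuclideanSpace ℂ n := WithLp.toLp 2 ((Z * W).col i)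
  have hv : Pairwise fun i j ↦ inner ℂ (v i) (v j) = 0 := by
    intro i j hij
    have hdiag : (Z * W)ᴴ * (Z * W) = diagonal (fun i ↦ (hZ.eigenvalues i : ℂ)) := by
      rw [conjTranspose_mul, Matrix.mul_assoc, ← Matrix.mul_assoc Zᴴ, ← Matrix.mul_assoc]
      exact (Unitary.conjStarAlgAut_star_apply _ _).symm.trans
        hZ.conjStarAlgAut_star_eigenvectorUnitary
    exact (inner_matrix_col_col (Z * W) (Z * W) i j).trans (hdiag ▸ diagonal_apply_ne _ hij)
  obtain ⟨u, hu, hvu⟩ := exists_orthonormal_eq_norm_smul hv (by simpa using hcard)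
  let K : Matrix n m ℂ := of fun x i ↦ u i x
  let D : Matrix m m ℂ := diagonal fun i ↦ (‖v i‖ : ℂ)
  have hK : Kᴴ * K = 1 := by
    ext i j
    rw [← inner_matrix_col_col, one_apply]
    exact orthonormal_iff_ite.mp hu i j
  have hD : D.PosSemidef := posSemidef_diagonal_iff.mpr fun i ↦ by simp
  have hZW : Z * W = K * D := by
    ext x i
    rw [mul_diagonal]
    simpa [v, K, mul_comm] using congr($(hvu i) x)
  refine ⟨K * Wᴴ, W * D * Wᴴ, ?_, hD.mul_mul_conjTranspose_same W, ?_⟩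
  · rw [conjTranspose_mul, conjTranspose_conjTranspose, Matrix.mul_assoc, ← Matrix.mul_assoc Kᴴ,
      hK, Matrix.one_mul, hWW']
  · calc Z = Z * W * Wᴴ := by rw [Matrix.mul_assoc, hWW', Matrix.mul_one]
      _ = K * (Wᴴ * W) * D * Wᴴ := by rw [hZW, hWW, Matrix.mul_one]
      _ = K * Wᴴ * (W * D * Wᴴ) := by simp only [Matrix.mul_assoc]

end Polar

section Contraction

variable {k l m n : Type*} [Fintype k] [DecidableEq k] [Fintype l] [Fintype m] [DecidableEq n]

/-- A matrix of operator norm at most one, expressed through the Loewner order: `Cᴴ C ≤ 1`. -/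
def IsContraction (C : Matrix m n ℂ) : Prop :=
  (1 - Cᴴ * C).PosSemidef

lemma isContraction_of_isometry {K : Matrix m n ℂ} (hK : Kᴴ * K = 1) : IsContraction K := by
  rw [IsContraction, hK, sub_self]
  exact PosSemidef.zero

namespace IsContraction

lemma conjTranspose [DecidableEq m] [Fintype n] {C : Matrix m n ℂ} (hC : IsContraction C) :
    IsContraction Cᴴ := by
  have hsum : 1 - C * Cᴴ = (1 - C * Cᴴ)ᴴ * (1 - C * Cᴴ) + C * (1 - Cᴴ * C) * Cᴴ := by
    simp only [conjTranspose_sub, conjTranspose_one, conjTranspose_mul,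
      conjTranspose_conjTranspose, Matrix.sub_mul, Matrix.mul_sub, Matrix.one_mul, Matrix.mul_one,
      Matrix.mul_assoc]
    abel
  rw [IsContraction, conjTranspose_conjTranspose, hsum]
  exact (posSemidef_conjTranspose_mul_self _).add (hC.mul_mul_conjTranspose_same C)

lemma mul [DecidableEq m] [Finite n] {C : Matrix l m ℂ} {D : Matrix m n ℂ} (hC : IsContraction C)
    (hD : IsContraction D) : IsContraction (C * D) := by
  have hsum : 1 - (C * D)ᴴ * (C * D) = (1 - Dᴴ * D) + Dᴴ * (1 - Cᴴ * C) * D := by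
    simp only [conjTranspose_mul, Matrix.mul_sub, Matrix.sub_mul, Matrix.mul_one, Matrix.mul_assoc]
    abel
  rw [IsContraction, hsum]
  exact hD.add (hC.conjTranspose_mul_mul_same D)

lemma re_trace_mul_le [Fintype n] {S C : Matrix n n ℂ} (hC : IsContraction C) (hS : S.PosSemidef) :
    (S * C).trace.re ≤ S.trace.re := by
  have hsum : (1 - C)ᴴ * (1 - C) + (1 - Cᴴ * C) = 1 + 1 - C - Cᴴ := by
    simp only [conjTranspose_sub, conjTranspose_one]
    noncomm_ring
  have hpsd : (1 + 1 - C - Cᴴ).PosSemidef :=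
    hsum ▸ (posSemidef_conjTranspose_mul_self _).add hC
  have hadj : (S * Cᴴ).trace.re = (S * C).trace.re := by
    rw [← hS.isHermitian.eq, ← conjTranspose_mul, trace_conjTranspose, hS.isHermitian.eq,
      trace_mul_comm]
    rfl
  have := re_trace_mul_nonneg hS hpsd
  simp only [Matrix.mul_sub, Matrix.mul_add, Matrix.mul_one, trace_sub, trace_add, Complex.sub_re,
    Complex.add_re, hadj] at this
  linarith

end IsContraction

/-- The polar decomposition of `Xᴴ`, first padded with zero rows so that its polar factor can be an
isometry; `P` is a block of this isometry. -/
lemma exists_posSemidef_eq_mul_isContraction (X : Matrix k m ℂ) :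
    ∃ (A : Matrix k k ℂ) (P : Matrix m k ℂ),
      A.PosSemidef ∧ A * A = X * Xᴴ ∧ IsContraction P ∧ A = X * P := by
  obtain ⟨K, A, hK, hA, hKA⟩ :=
    exists_isometry_mul_posSemidef (fromRows Xᴴ (0 : Matrix k k ℂ)) (by simp)
  obtain ⟨P, Q, rfl⟩ : ∃ P Q, K = fromRows P Q := ⟨_, _, (fromRows_toRows K).symm⟩
  rw [conjTranspose_fromRows_eq_fromCols_conjTranspose, fromCols_mul_fromRows] at hK
  obtain ⟨hX, hQA⟩ : Xᴴ = P * A ∧ 0 = Q * A := by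
    rwa [fromRows_mul, fromRows_ext_iff] at hKA
  have hX' : X = A * Pᴴ := by
    rw [← conjTranspose_conjTranspose X, hX, conjTranspose_mul, hA.isHermitian.eq]
  have hAQ : A * Qᴴ = 0 := by
    rw [← hA.isHermitian.eq, ← conjTranspose_mul, ← hQA, conjTranspose_zero]
  have hAXP : A = X * P := by
    calc A = A * (Pᴴ * P + Qᴴ * Q) := by rw [hK, Matrix.mul_one]
      _ = X * P := by
        rw [Matrix.mul_add, ← Matrix.mul_assoc, ← Matrix.mul_assoc, hAQ, Matrix.zero_mul, add_zero,
          ← hX']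
  refine ⟨A, P, hA, ?_, ?_, hAXP⟩
  · rw [hX, ← Matrix.mul_assoc, ← hAXP]
  · rw [IsContraction, ← hK, add_sub_cancel_left]
    exact posSemidef_conjTranspose_mul_self Q

end Contraction

section Uhlmann

variable {k m n : Type*} [Fintype k] [Fintype m] [DecidableEq m] [Fintype n]

/-- Uhlmann's theorem, with `A` and `B` playing the roles of `√(X Xᴴ)` and `√(Y Yᴴ)`. -/
theorem exists_sqrt_re_trace_mul_le (X : Matrix k m ℂ) (Y : Matrix k n ℂ)
    (hcard : Fintype.card m ≤ Fintype.card n) :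
    ∃ (A B : Matrix k k ℂ) (W : Matrix m n ℂ), A.PosSemidef ∧ A * A = X * Xᴴ ∧
      B.PosSemidef ∧ B * B = Y * Yᴴ ∧ W * Wᴴ = 1 ∧
      (A * B).trace.re ≤ (Yᴴ * (X * W)).trace.re := by
  classical
  obtain ⟨A, P, hA, hAA, hP, hAXP⟩ := exists_posSemidef_eq_mul_isContraction X
  obtain ⟨B, Q, hB, hBB, hQ, hBYQ⟩ := exists_posSemidef_eq_mul_isContraction Y
  obtain ⟨K, S, hK, hS, hYX⟩ := exists_isometry_mul_posSemidef (Yᴴ * X) hcard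
  refine ⟨A, B, Kᴴ, hA, hAA, hB, hBB, by rwa [conjTranspose_conjTranspose], ?_⟩
  have hcontr : IsContraction (P * (Qᴴ * K)) :=
    hP.mul (hQ.conjTranspose.mul (isContraction_of_isometry hK))
  calc (A * B).trace.re = (Bᴴ * A).trace.re := by rw [trace_mul_comm, hB.isHermitian.eq]
    _ = (Qᴴ * (Yᴴ * X) * P).trace.re := by
      rw [hAXP, hBYQ, conjTranspose_mul]
      simp only [Matrix.mul_assoc]
    _ = (S * (P * (Qᴴ * K))).trace.re := by
      rw [hYX, ← Matrix.mul_assoc Qᴴ, Matrix.mul_assoc (Qᴴ * K), trace_mul_comm, Matrix.mul_assoc]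
    _ ≤ S.trace.re := hcontr.re_trace_mul_le hS
    _ = (Yᴴ * (X * Kᴴ)).trace.re := by
      rw [← Matrix.mul_assoc, hYX, trace_mul_comm, ← Matrix.mul_assoc, hK, Matrix.one_mul]

end Uhlmann

section PowersStormer

variable {n : Type*} [Fintype n]

open scoped MatrixOrder in
lemma exists_sign_of_isHermitian [DecidableEq n] {D : Matrix n n ℂ} (hD : D.IsHermitian) :
    ∃ J : Matrix n n ℂ, J.IsHermitian ∧ J * J = 1 ∧ D * J = J * D ∧
      (J * D - D).PosSemidef ∧ (J * D + D).PosSemidef := by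
  have hD' : IsSelfAdjoint D := hD
  let sgn (x : ℝ) : ℝ := if 0 ≤ x then 1 else -1
  have hcont (f : ℝ → ℝ) : ContinuousOn f (spectrum ℝ D) :=
    D.finite_real_spectrum.continuousOn f
  have habs : cfc sgn D * D = cfc (fun x : ℝ ↦ |x|) D := by
    nth_rw 2 [← cfc_id ℝ D]
    rw [← cfc_mul sgn id D (hcont _) (hcont _)]
    congr! 2 with x
    grind
  refine ⟨cfc sgn D, cfc_predicate sgn D, ?_, ?_, ?_, ?_⟩
  · rw [← cfc_mul sgn sgn D (hcont _) (hcont _), ← cfc_one ℝ D]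
    congr! 2 with x
    by_cases hx : 0 ≤ x <;> simp [sgn, hx]
  · simpa only [cfc_id ℝ D] using (cfc_commute_cfc id sgn D).eq
  · have : cfc (fun x : ℝ ↦ |x|) D - D = cfc (fun x : ℝ ↦ |x| - x) D := by
      rw [cfc_sub (fun x : ℝ ↦ |x|) (fun x ↦ x) D (hcont _) (hcont _), cfc_id' ℝ D]
    have hnonneg : 0 ≤ cfc (fun x : ℝ ↦ |x| - x) D :=
      cfc_nonneg fun x _ ↦ sub_nonneg.mpr (le_abs_self x)
    rw [habs, this]
    exact hnonneg.posSemidef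
  · have : cfc (fun x : ℝ ↦ |x|) D + D = cfc (fun x : ℝ ↦ |x| + x) D := by
      rw [cfc_add D (fun x : ℝ ↦ |x|) (fun x ↦ x) (hcont _) (hcont _), cfc_id' ℝ D]
    have hnonneg : 0 ≤ cfc (fun x : ℝ ↦ |x| + x) D :=
      cfc_nonneg fun x _ ↦ neg_le_iff_add_nonneg'.mp (neg_abs_le x)
    rw [habs, this]
    exact hnonneg.posSemidef

/-- The Powers–Størmer inequality, with `‖A² - B²‖₁` bounded by Cauchy–Schwarz. -/
theorem purity_sub_le_sqrt_card_mul_purity_sub {A B : Matrix n n ℂ} (hA : A.PosSemidef)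
    (hB : B.PosSemidef) :
    purity (A - B) ≤ √(Fintype.card n * purity (A * A - B * B)) := by
  classical
  have hAB : (A - B).IsHermitian := hA.isHermitian.sub hB.isHermitian
  obtain ⟨J, hJ, hJJ, hcomm, hpos, hneg⟩ := exists_sign_of_isHermitian hAB
  have hle : purity (A - B) ≤ (J * (A - B) * (A + B)).trace.re := by
    have hsplit : J * (A - B) * (A + B) - (A - B) * (A - B)
        = (J * (A - B) - (A - B)) * A + (J * (A - B) + (A - B)) * B := by
      noncomm_ring
    have hre := congr((Matrix.trace $hsplit).re)
    rw [trace_sub, trace_add, Complex.sub_re, Complex.add_re] at hre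
    have := re_trace_mul_nonneg hpos hA
    have := re_trace_mul_nonneg hneg hB
    rw [purity]
    linarith
  have hsymm : (J * (A - B) * (A + B)).trace = (J * (A * A - B * B)).trace := by
    have hcycle : (J * (A + B) * (A - B)).trace = (J * (A - B) * (A + B)).trace := by
      rw [trace_mul_cycle, hcomm]
    have hsum : J * (A - B) * (A + B) + J * (A + B) * (A - B)
        = J * (A * A - B * B) + J * (A * A - B * B) := by
      noncomm_ring
    have := congr(Matrix.trace $hsum)
    rw [trace_add, trace_add, hcycle] at this
    linear_combination this / 2
  have hAABB : (A * A - B * B).IsHermitian := by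
    rw [IsHermitian, conjTranspose_sub, conjTranspose_mul, conjTranspose_mul, hA.isHermitian.eq,
      hB.isHermitian.eq]
  calc purity (A - B) ≤ (Jᴴ * (A * A - B * B)).trace.re := by rwa [hJ.eq, ← hsymm]
    _ ≤ √(Jᴴ * J).trace.re * √((A * A - B * B)ᴴ * (A * A - B * B)).trace.re :=
      re_trace_conjTranspose_mul_le _ _
    _ = √(Fintype.card n * purity (A * A - B * B)) := by
      rw [hJ.eq, hJJ, hAABB.eq, trace_one, ← purity, Real.sqrt_mul (by positivity)]
      rfl

end PowersStormer

section Overlap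

variable {k m n : Type*} [Fintype k] [Fintype m] [DecidableEq m] [Fintype n]

theorem exists_coisometry_overlap_ge {X : Matrix k m ℂ} {Y : Matrix k n ℂ}
    (hcard : Fintype.card m ≤ Fintype.card n) (hX : (X * Xᴴ).trace = 1)
    (hY : (Y * Yᴴ).trace = 1) :
    ∃ W : Matrix m n ℂ, W * Wᴴ = 1 ∧
      1 - √(Fintype.card k * purity (X * Xᴴ - Y * Yᴴ)) / 2 ≤ (Yᴴ * (X * W)).trace.re := by
  obtain ⟨A, B, W, hA, hAA, hB, hBB, hW, hle⟩ := exists_sqrt_re_trace_mul_le X Y hcard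
  have hps := purity_sub_le_sqrt_card_mul_purity_sub hA hB
  have hpurity : purity (A - B) = 2 - 2 * (A * B).trace.re := by
    simp only [purity, Matrix.sub_mul, Matrix.mul_sub, trace_sub, hAA, hBB, hX, hY,
      trace_mul_comm B A, Complex.sub_re, Complex.one_re]
    ring
  rw [hpurity, hAA, hBB] at hps
  exact ⟨W, hW, by linarith⟩

end Overlap

section Phases

open scoped BigOperators

variable {ι : Type*}

/-- The vector of cube roots of unity with exponents `θ`. Order three suffices to make fourth
moments agree with those of independent uniform phases. -/
noncomputable def phase (θ : ι → ZMod 3) (i : ι) : ℂ :=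
  ZMod.stdAddChar (θ i)

lemma star_phase (θ : ι → ZMod 3) (i : ι) : star (phase θ i) = ZMod.stdAddChar (-θ i) :=
  (AddChar.map_neg_eq_conj _ _).symm

lemma forall_add_eq_add_iff_sym2_eq {i j k l : ι} :
    (∀ θ : ι → ZMod 3, θ i + θ j = θ k + θ l) ↔ s(i, j) = s(k, l) := by
  classical
  have injective_eval {a b : ι} (h : ∀ θ : ι → ZMod 3, θ a = θ b) : a = b := by
    by_contra hne
    simpa [Pi.single_eq_of_ne' hne] using h (Pi.single a 1)
  constructor
  · intro h
    obtain rfl | rfl : i = k ∨ i = l := by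
      by_contra! hne
      have := h (Pi.single i 1)
      rw [Pi.single_eq_same, Pi.single_eq_of_ne hne.1.symm, Pi.single_eq_of_ne hne.2.symm,
        Pi.single_apply] at this
      revert this
      split_ifs <;> decide
    · rw [injective_eval fun θ ↦ add_left_cancel (h θ)]
    · rw [injective_eval fun θ ↦ add_left_cancel ((h θ).trans (add_comm _ _)), Sym2.eq_swap]
  · rw [Sym2.eq_iff]
    rintro (⟨rfl, rfl⟩ | ⟨rfl, rfl⟩) θ
    · rfl
    · exact add_comm _ _

variable [DecidableEq ι]

lemma diagonal_phase_mem_unitaryGroup [Fintype ι] (θ : ι → ZMod 3) :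
    diagonal (phase θ) ∈ unitaryGroup ι ℂ := by
  rw [mem_unitaryGroup_iff, star_eq_conjTranspose, diagonal_conjTranspose, diagonal_mul_diagonal,
    ← diagonal_one]
  congr! with i
  rw [Pi.star_apply, star_phase, phase, ← AddChar.map_add_eq_mul, add_neg_cancel,
    AddChar.map_zero_eq_one]

lemma expect_phase_mul_phase_mul_star_mul_star [Fintype ι] (i j k l : ι) :
    𝔼 θ : ι → ZMod 3, phase θ i * phase θ j * star (phase θ k) * star (phase θ l) =
      if s(i, j) = s(k, l) then 1 else 0 := by
  let eval (i : ι) : (ι → ZMod 3) →+ ZMod 3 := Pi.evalAddMonoidHom (fun _ ↦ ZMod 3) i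
  let exponent : (ι → ZMod 3) →+ ZMod 3 :=
    eval i + eval j - eval k - eval l
  let χ : AddChar (ι → ZMod 3) ℂ := ZMod.stdAddChar.compAddMonoidHom exponent
  have hχ (θ : ι → ZMod 3) :
      phase θ i * phase θ j * star (phase θ k) * star (phase θ l) = χ θ := by
    rw [star_phase, star_phase]
    simp [χ, exponent, eval, phase, sub_eq_add_neg, AddChar.map_add_eq_mul]
  have htriv : χ = 0 ↔ s(i, j) = s(k, l) := by
    rw [← forall_add_eq_add_iff_sym2_eq, AddChar.ext_iff]
    refine forall_congr' fun θ ↦ ?_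
    rw [AddChar.zero_apply, AddChar.compAddMonoidHom_apply,
      ← AddChar.map_zero_eq_one (ZMod.stdAddChar (N := 3)), ZMod.injective_stdAddChar.eq_iff]
    simp [exponent, eval, sub_sub, sub_eq_zero]
  simp only [hχ, AddChar.expect_eq_ite, htriv]

lemma sum_ite_sym2_eq {M : Type*} [Fintype ι] [AddCommGroup M] (g : ι → ι → ι → ι → M) :
    ∑ i, ∑ j, ∑ k, ∑ l, (if s(i, j) = s(k, l) then g i j k l else 0) =
      ∑ i, ∑ j, g i j i j + ∑ i, ∑ j, g i j j i - ∑ i, g i i i i := by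
  have hite (i j k l : ι) : (if s(i, j) = s(k, l) then g i j k l else 0) =
      (if k = i ∧ l = j then g i j k l else 0) + (if l = i ∧ k = j then g i j k l else 0) -
        if i = j ∧ k = j ∧ l = j then g i j k l else 0 := by
    simp only [Sym2.eq_iff]
    split_ifs <;> grind
  simp_rw [hite, ite_and, Finset.sum_sub_distrib, Finset.sum_add_distrib]
  simp

end Phases

section Permutations

open scoped BigOperators

variable {ι : Type*} [Fintype ι]

lemma sum_sum_eq_sum_diag_add_sum_offDiag {M : Type*} [AddCommMonoid M] (f : ι → ι → M) :
    ∑ i, ∑ j, f i j = ∑ i, f i i + ∑ p ∈ (Finset.univ : Finset ι).offDiag, f p.1 p.2 := by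
  classical
  rw [← Finset.sum_product', ← Finset.diag_union_offDiag,
    Finset.sum_union (Finset.disjoint_diag_offDiag _), Finset.sum_diag]

variable [DecidableEq ι]

open Finset in
lemma expect_perm_apply_apply (h : ι → ι → ℝ) {i j : ι} (hij : i ≠ j) :
    𝔼 π : Equiv.Perm ι, h (π i) (π j) = 𝔼 p ∈ univ.offDiag, h p.1 p.2 := by
  have htrans (p : ι × ι) (hp : p ∈ univ.offDiag) :
      𝔼 π : Equiv.Perm ι, h (π p.1) (π p.2) = 𝔼 π : Equiv.Perm ι, h (π i) (π j) := by
    obtain ⟨τ, h₁, h₂⟩ := MulAction.is_two_pretransitive_iff.mp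
      (Equiv.Perm.isMultiplyPretransitive ι 2) (mem_offDiag.mp hp).2.2 hij
    exact (Fintype.expect_equiv (Equiv.mulRight τ) _ _ fun π ↦ by simp [← h₁, ← h₂]).symm
  have hne : (univ.offDiag : Finset (ι × ι)).Nonempty := ⟨(i, j), by simpa⟩
  calc 𝔼 π : Equiv.Perm ι, h (π i) (π j)
      = 𝔼 p ∈ univ.offDiag, 𝔼 π : Equiv.Perm ι, h (π p.1) (π p.2) := by
        rw [expect_congr rfl htrans, expect_const hne]
    _ = 𝔼 π : Equiv.Perm ι, 𝔼 p ∈ univ.offDiag, h (π p.1) (π p.2) := expect_comm ..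
    _ = 𝔼 π : Equiv.Perm ι, 𝔼 p ∈ univ.offDiag, h p.1 p.2 := by
        refine expect_congr rfl fun π _ ↦ expect_equiv (π.prodCongr π) (by simp) (by simp)
    _ = 𝔼 p ∈ univ.offDiag, h p.1 p.2 := Fintype.expect_const _

open Finset in
lemma expect_perm_sum_sum_ite (r : ι → ι → Prop) [DecidableRel r] (hr : ∀ i, r i i)
    (h : ι → ι → ℝ) :
    𝔼 π : Equiv.Perm ι, ∑ i, ∑ j, (if r i j then h (π i) (π j) else 0) =
      ∑ i, h i i + (∑ i, ∑ j, (if r i j then 1 else 0) - Fintype.card ι) *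
        ((∑ i, ∑ j, h i j - ∑ i, h i i) / (Fintype.card ι * (Fintype.card ι - 1))) := by
  have hdiag (π : Equiv.Perm ι) : ∑ i, h (π i) (π i) = ∑ i, h i i :=
    Equiv.sum_comp π fun i ↦ h i i
  have hoff : 𝔼 p ∈ univ.offDiag, h p.1 p.2 =
      (∑ p ∈ univ.offDiag, h p.1 p.2) / (Fintype.card ι * (Fintype.card ι - 1)) := by
    rw [expect_eq_sum_div_card, offDiag_card, Nat.cast_sub (Nat.le_mul_self _), card_univ]
    push_cast
    ring
  simp_rw [sum_sum_eq_sum_diag_add_sum_offDiag, hr, if_true, hdiag, expect_add_distrib,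
    Fintype.expect_const, ← sum_filter, expect_sum_comm]
  rw [sum_congr rfl fun p hp ↦ expect_perm_apply_apply h (mem_offDiag.mp (mem_filter.mp hp).1).2.2,
    sum_const, sum_const, sum_const, hoff, card_univ]
  simp only [nsmul_eq_mul, mul_one, add_sub_cancel_left]

end Permutations

section PartialTrace

variable {ι κ : Type*}

/-- The entry `⟨i| ρ |k⟩` of a matrix on `ι × κ`, an operator on the second factor. -/
def block (ρ : Matrix (ι × κ) (ι × κ) ℂ) (i k : ι) : Matrix κ κ ℂ :=
  ρ.submatrix (Prod.mk i) (Prod.mk k)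

lemma isHermitian_block {ρ : Matrix (ι × κ) (ι × κ) ℂ} (hρ : ρ.IsHermitian) (i : ι) :
    (block ρ i i).IsHermitian :=
  hρ.submatrix _

/-- The second moments of the blocks of `ρ`, which determine the purities of all its reductions;
`i`, `j` are row indices and `k`, `l` column indices. -/
noncomputable def blockMoment [Fintype κ] (ρ : Matrix (ι × κ) (ι × κ) ℂ) (i j k l : ι) : ℂ :=
  (block ρ i k * block ρ j l).trace

/-- The partial trace over the first tensor factor. -/
def traceLeft [Fintype ι] (ρ : Matrix (ι × κ) (ι × κ) ℂ) : Matrix κ κ ℂ :=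
  ∑ i, block ρ i i

/-- The partial trace over `ι₁` of a matrix on `(ι₁ × ι₂) × κ`. -/
def traceLeftLeft {ι₁ ι₂ : Type*} [Fintype ι₁] (ρ : Matrix ((ι₁ × ι₂) × κ) ((ι₁ × ι₂) × κ) ℂ) :
    Matrix (ι₂ × κ) (ι₂ × κ) ℂ :=
  traceLeft (ρ.submatrix (Equiv.prodAssoc ι₁ ι₂ κ).symm (Equiv.prodAssoc ι₁ ι₂ κ).symm)

lemma isHermitian_traceLeft [Fintype ι] {ρ : Matrix (ι × κ) (ι × κ) ℂ} (hρ : ρ.IsHermitian) :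
    (traceLeft ρ).IsHermitian := by
  rw [IsHermitian, traceLeft, conjTranspose_sum]
  exact Finset.sum_congr rfl fun i _ ↦ isHermitian_block hρ i

lemma traceLeft_traceLeftLeft {ι₁ ι₂ : Type*} [Fintype ι₁] [Fintype ι₂]
    (ρ : Matrix ((ι₁ × ι₂) × κ) ((ι₁ × ι₂) × κ) ℂ) :
    traceLeft (traceLeftLeft ρ) = traceLeft ρ := by
  ext r s
  simp [traceLeft, traceLeftLeft, block, Matrix.sum_apply, Fintype.sum_prod_type_right]

variable [Fintype κ]

lemma trace_traceLeft [Fintype ι] (ρ : Matrix (ι × κ) (ι × κ) ℂ) :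
    (traceLeft ρ).trace = ρ.trace := by
  simp [traceLeft, block, Matrix.trace, Matrix.sum_apply, Fintype.sum_prod_type_right]

lemma purity_nonneg {ρ : Matrix κ κ ℂ} (hρ : ρ.IsHermitian) : 0 ≤ purity ρ := by
  rw [purity]
  nth_rw 1 [← hρ.eq]
  exact re_trace_nonneg (posSemidef_conjTranspose_mul_self ρ)

variable [Fintype ι]

lemma trace_mul_self_eq_sum_blockMoment (ρ : Matrix (ι × κ) (ι × κ) ℂ) :
    (ρ * ρ).trace = ∑ i, ∑ j, blockMoment ρ i j j i := by
  simp only [Matrix.trace, diag_apply, Matrix.mul_apply, blockMoment, block, submatrix_apply,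
    Fintype.sum_prod_type]
  exact Finset.sum_congr rfl fun i _ ↦ Finset.sum_comm

lemma trace_traceLeft_mul_self_eq_sum_blockMoment (ρ : Matrix (ι × κ) (ι × κ) ℂ) :
    (traceLeft ρ * traceLeft ρ).trace = ∑ i, ∑ j, blockMoment ρ i j i j := by
  simp_rw [traceLeft, Matrix.sum_mul, Matrix.mul_sum, trace_sum, blockMoment]

lemma trace_traceLeftLeft_mul_self_eq_sum_blockMoment {ι₁ ι₂ : Type*} [Fintype ι₁] [Fintype ι₂]
    (ρ : Matrix ((ι₁ × ι₂) × κ) ((ι₁ × ι₂) × κ) ℂ) :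
    (traceLeftLeft ρ * traceLeftLeft ρ).trace =
      ∑ i, ∑ j, blockMoment ρ i j (i.1, j.2) (j.1, i.2) := by
  rw [trace_mul_self_eq_sum_blockMoment]
  have hblock (a b : ι₂) : block (traceLeftLeft ρ) a b = ∑ i₁, block ρ (i₁, a) (i₁, b) := by
    ext r s
    simp [traceLeftLeft, traceLeft, block, Matrix.sum_apply]
  simp_rw [blockMoment, hblock, Matrix.sum_mul, Matrix.mul_sum, trace_sum,
    Fintype.sum_prod_type_right]
  exact Finset.sum_congr rfl fun _ _ ↦ Finset.sum_comm

lemma trace_mul_one_kronecker [DecidableEq ι] (ρ : Matrix (ι × κ) (ι × κ) ℂ) (τ : Matrix κ κ ℂ) :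
    (ρ * (1 ⊗ₖ τ)).trace = (traceLeft ρ * τ).trace := by
  simp only [Matrix.trace, diag_apply, Matrix.mul_apply, traceLeft, block, Matrix.sum_apply,
    submatrix_apply, kronecker_apply, one_apply, Fintype.sum_prod_type, Finset.sum_mul, ite_mul,
    mul_ite, one_mul, zero_mul, mul_zero, Finset.sum_ite_irrel, Finset.sum_ite_eq',
    Finset.sum_const_zero, Finset.mem_univ, if_true]
  rw [Finset.sum_comm]

lemma purity_sub_smul_one_kronecker [DecidableEq ι] [Nonempty ι]
    (ρ : Matrix (ι × κ) (ι × κ) ℂ) :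
    purity (ρ - (Fintype.card ι : ℂ)⁻¹ • (1 ⊗ₖ traceLeft ρ)) =
      purity ρ - purity (traceLeft ρ) / Fintype.card ι := by
  set τ := traceLeft ρ
  have hsq : ((1 ⊗ₖ τ) * (1 ⊗ₖ τ) : Matrix (ι × κ) (ι × κ) ℂ).trace =
      Fintype.card ι * (τ * τ).trace := by
    rw [← mul_kronecker_mul, trace_kronecker, Matrix.one_mul, trace_one]
  have htrace : ((ρ - (Fintype.card ι : ℂ)⁻¹ • (1 ⊗ₖ τ)) *
      (ρ - (Fintype.card ι : ℂ)⁻¹ • (1 ⊗ₖ τ))).trace =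
      (ρ * ρ).trace - (τ * τ).trace / Fintype.card ι := by
    simp only [Matrix.sub_mul, Matrix.mul_sub, Matrix.smul_mul, Matrix.mul_smul, trace_sub,
      trace_smul, smul_eq_mul, trace_mul_comm _ ρ, trace_mul_one_kronecker, hsq]
    field_simp
    ring
  rw [purity, htrace, Complex.sub_re, Complex.div_natCast_re, purity, purity]

end PartialTrace

section LocalConj

variable {ι κ : Type*} [Fintype ι] [Fintype κ] [DecidableEq κ]

/-- Conjugation by `U ⊗ 1`, the evolution of `ρ` under `U` acting on the first tensor factor. -/
def localConj (U : Matrix ι ι ℂ) (ρ : Matrix (ι × κ) (ι × κ) ℂ) : Matrix (ι × κ) (ι × κ) ℂ :=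
  (U ⊗ₖ 1) * ρ * (U ⊗ₖ 1)ᴴ

lemma localConj_mul (U V : Matrix ι ι ℂ) (ρ : Matrix (ι × κ) (ι × κ) ℂ) :
    localConj (U * V) ρ = localConj U (localConj V ρ) := by
  have hkron : (U * V) ⊗ₖ (1 : Matrix κ κ ℂ) = (U ⊗ₖ 1) * (V ⊗ₖ 1) := by
    rw [← mul_kronecker_mul, Matrix.one_mul]
  simp only [localConj, hkron, conjTranspose_mul, Matrix.mul_assoc]

lemma isHermitian_localConj {ρ : Matrix (ι × κ) (ι × κ) ℂ} (hρ : ρ.IsHermitian)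
    (U : Matrix ι ι ℂ) : (localConj U ρ).IsHermitian :=
  isHermitian_mul_mul_conjTranspose _ hρ

lemma block_localConj (U : Matrix ι ι ℂ) (ρ : Matrix (ι × κ) (ι × κ) ℂ) (i k : ι) :
    block (localConj U ρ) i k = ∑ i', ∑ k', (U i i' * star (U k k')) • block ρ i' k' := by
  rw [Finset.sum_comm]
  ext r s
  simp [block, localConj, Matrix.mul_apply, Matrix.sum_apply, Fintype.sum_prod_type, one_apply,
    Finset.sum_mul, apply_ite, mul_right_comm]

lemma blockMoment_localConj (U : Matrix ι ι ℂ) (ρ : Matrix (ι × κ) (ι × κ) ℂ) (i j k l : ι) :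
    blockMoment (localConj U ρ) i j k l = ∑ i', ∑ j', ∑ k', ∑ l',
      U i i' * U j j' * star (U k k') * star (U l l') * blockMoment ρ i' j' k' l' := by
  simp_rw [blockMoment, block_localConj, Matrix.sum_mul, Matrix.mul_sum, trace_sum,
    Matrix.smul_mul, Matrix.mul_smul, trace_smul, smul_eq_mul]
  refine Finset.sum_congr rfl fun i' _ ↦ ?_
  rw [Finset.sum_comm]
  refine Finset.sum_congr rfl fun j' _ ↦ Finset.sum_congr rfl fun k' _ ↦
    Finset.sum_congr rfl fun l' _ ↦ ?_
  ring

variable [DecidableEq ι]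

lemma blockMoment_localConj_diagonal (t : ι → ℂ) (ρ : Matrix (ι × κ) (ι × κ) ℂ) (i j k l : ι) :
    blockMoment (localConj (diagonal t) ρ) i j k l =
      t i * t j * star (t k) * star (t l) * blockMoment ρ i j k l := by
  simp [blockMoment_localConj, diagonal_apply, apply_ite]

lemma blockMoment_localConj_permMatrix (π : Equiv.Perm ι) (ρ : Matrix (ι × κ) (ι × κ) ℂ)
    (i j k l : ι) :
    blockMoment (localConj (π.permMatrix ℂ) ρ) i j k l = blockMoment ρ (π i) (π j) (π k) (π l) := by
  simp [blockMoment_localConj, PEquiv.toMatrix_apply, Equiv.Perm.permMatrix]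

lemma traceLeft_localConj {U : Matrix ι ι ℂ} (hU : U ∈ unitaryGroup ι ℂ)
    (ρ : Matrix (ι × κ) (ι × κ) ℂ) : traceLeft (localConj U ρ) = traceLeft ρ := by
  refine ext_iff_trace_mul_right.mpr fun τ ↦ ?_
  have hcomm : (U ⊗ₖ (1 : Matrix κ κ ℂ))ᴴ * ((1 ⊗ₖ τ) * (U ⊗ₖ 1)) = 1 ⊗ₖ τ := by
    rw [conjTranspose_kronecker, ← mul_kronecker_mul, ← mul_kronecker_mul, conjTranspose_one,
      Matrix.one_mul, Matrix.one_mul, Matrix.mul_one, ← star_eq_conjTranspose,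
      mem_unitaryGroup_iff'.mp hU]
  rw [← trace_mul_one_kronecker, ← trace_mul_one_kronecker, localConj, Matrix.mul_assoc,
    Matrix.mul_assoc, trace_mul_comm, Matrix.mul_assoc, Matrix.mul_assoc, hcomm]

lemma purity_localConj {U : Matrix ι ι ℂ} (hU : U ∈ unitaryGroup ι ℂ)
    (ρ : Matrix (ι × κ) (ι × κ) ℂ) : purity (localConj U ρ) = purity ρ := by
  have hUU : (U ⊗ₖ (1 : Matrix κ κ ℂ))ᴴ * (U ⊗ₖ 1) = 1 := by
    rw [conjTranspose_kronecker, ← mul_kronecker_mul, conjTranspose_one, Matrix.one_mul,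
      ← star_eq_conjTranspose, mem_unitaryGroup_iff'.mp hU, one_kronecker_one]
  have hsq : localConj U ρ * localConj U ρ = localConj U (ρ * ρ) := by
    simp only [localConj, Matrix.mul_assoc]
    rw [← Matrix.mul_assoc _ᴴ (U ⊗ₖ 1), hUU, Matrix.one_mul]
  rw [purity, hsq, localConj, trace_mul_cycle, hUU, Matrix.one_mul, purity]

end LocalConj

section FlatUnitary

open scoped BigOperators

variable {ι κ : Type*} [Fintype ι] [DecidableEq ι] [Fintype κ] [DecidableEq κ]

lemma inv_sqrt_natCast_mul_self (d : ℕ) : (√d : ℂ)⁻¹ * (√d : ℂ)⁻¹ = (d : ℂ)⁻¹ := by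
  rw [← mul_inv, ← Complex.ofReal_mul, Real.mul_self_sqrt d.cast_nonneg, Complex.ofReal_natCast]

/-- The discrete Fourier transform, transported from `ZMod (card ι)`. -/
lemma exists_flat_mem_unitaryGroup (ι : Type*) [Fintype ι] [DecidableEq ι] [Nonempty ι] :
    ∃ F ∈ unitaryGroup ι ℂ, ∀ i j, F i j * star (F i j) = (Fintype.card ι : ℂ)⁻¹ := by
  set d := Fintype.card ι
  have : NeZero d := ⟨Fintype.card_ne_zero⟩
  have hd : (d : ℂ) ≠ 0 := NeZero.ne _
  let e : ι ≃ ZMod d := Fintype.equivOfCardEq (ZMod.card d).symm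
  let F : Matrix ι ι ℂ := of fun i j ↦ (√d : ℂ)⁻¹ * ZMod.stdAddChar (e i * e j)
  have hF (i j k l : ι) :
      F i j * star (F k l) = (d : ℂ)⁻¹ * ZMod.stdAddChar (e i * e j - e k * e l) := by
    have hstar : star (ZMod.stdAddChar (e k * e l) : ℂ) = ZMod.stdAddChar (-(e k * e l)) :=
      (AddChar.map_neg_eq_conj _ _).symm
    simp only [F, of_apply, star_mul', star_inv₀, Complex.star_def, Complex.conj_ofReal]
    rw [← Complex.star_def, hstar, mul_mul_mul_comm, inv_sqrt_natCast_mul_self,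
      ← AddChar.map_add_eq_mul, sub_eq_add_neg]
  refine ⟨F, ?_, fun i j ↦ by rw [hF, sub_self, AddChar.map_zero_eq_one, mul_one]⟩
  rw [mem_unitaryGroup_iff, star_eq_conjTranspose]
  ext i j
  calc (F * Fᴴ) i j = (d : ℂ)⁻¹ * ∑ x : ZMod d, ZMod.stdAddChar (x * (e i - e j)) := by
        rw [Matrix.mul_apply, ← Equiv.sum_comp e, Finset.mul_sum]
        refine Finset.sum_congr rfl fun x _ ↦ ?_
        rw [conjTranspose_apply, hF, mul_sub, mul_comm (e i), mul_comm (e j)]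
    _ = (1 : Matrix ι ι ℂ) i j := by
        rw [AddChar.sum_mulShift _ (ZMod.isPrimitive_stdAddChar d), ZMod.card, one_apply]
        simp [sub_eq_zero, hd]

lemma re_expect {α : Type*} (s : Finset α) (f : α → ℂ) :
    (𝔼 a ∈ s, f a).re = 𝔼 a ∈ s, (f a).re := by
  rw [Finset.expect_eq_sum_div_card, Complex.div_natCast_re, Complex.re_sum,
    Finset.expect_eq_sum_div_card]

lemma expect_blockMoment_localConj_phase (ρ : Matrix (ι × κ) (ι × κ) ℂ) (i j k l : ι) :
    𝔼 θ : ι → ZMod 3, blockMoment (localConj (diagonal (phase θ)) ρ) i j k l =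
      if s(i, j) = s(k, l) then blockMoment ρ i j k l else 0 := by
  simp_rw [blockMoment_localConj_diagonal, ← Finset.expect_mul,
    expect_phase_mul_phase_mul_star_mul_star, ite_mul, one_mul, zero_mul]

lemma expect_sum_blockMoment_flat_mul_phase [Nonempty ι] {F : Matrix ι ι ℂ}
    (hF : ∀ i j, F i j * star (F i j) = (Fintype.card ι : ℂ)⁻¹)
    (ρ : Matrix (ι × κ) (ι × κ) ℂ) :
    𝔼 θ : ι → ZMod 3, ∑ m, blockMoment (localConj (F * diagonal (phase θ)) ρ) m m m m =
      (Fintype.card ι : ℂ)⁻¹ * (∑ i, ∑ j, blockMoment ρ i j i j + ∑ i, ∑ j, blockMoment ρ i j j i -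
        ∑ i, blockMoment ρ i i i i) := by
  set d := (Fintype.card ι : ℂ)
  have hflat (m i j k l : ι) (h : s(i, j) = s(k, l)) :
      F m i * F m j * star (F m k) * star (F m l) = d⁻¹ * d⁻¹ := by
    obtain ⟨rfl, rfl⟩ | ⟨rfl, rfl⟩ := Sym2.eq_iff.mp h
    · rw [mul_right_comm (F m i), hF, mul_assoc, hF]
    · rw [mul_assoc (F m i), hF, mul_right_comm, hF]
  have hm (m : ι) :
      𝔼 θ : ι → ZMod 3, blockMoment (localConj (F * diagonal (phase θ)) ρ) m m m m =
        d⁻¹ * d⁻¹ * ∑ i, ∑ j, ∑ k, ∑ l, if s(i, j) = s(k, l) then blockMoment ρ i j k l else 0 := by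
    simp_rw [localConj_mul, blockMoment_localConj F, Finset.expect_sum_comm, ← Finset.mul_expect,
      expect_blockMoment_localConj_phase, mul_ite, mul_zero, Finset.mul_sum, mul_ite, mul_zero]
    congr! 4 with i _ j _ k _ l _
    split_ifs with h
    · rw [hflat m i j k l h]
    · rfl
  have hd : d ≠ 0 := Nat.cast_ne_zero.mpr Fintype.card_ne_zero
  rw [Finset.expect_sum_comm, Finset.sum_congr rfl fun m _ ↦ hm m, Finset.sum_const,
    Finset.card_univ, nsmul_eq_mul, sum_ite_sym2_eq, ← mul_assoc, ← mul_assoc,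
    mul_inv_cancel₀ hd, one_mul]

/-- A flat unitary preceded by random phases spreads `ρ` evenly over the diagonal blocks. -/
lemma exists_sum_purity_block_localConj_le [Nonempty ι] {ρ : Matrix (ι × κ) (ι × κ) ℂ}
    (hρ : ρ.IsHermitian) :
    ∃ U ∈ unitaryGroup ι ℂ,
      Fintype.card ι * ∑ m, purity (block (localConj U ρ) m m) ≤
        purity (traceLeft ρ) + purity ρ := by
  obtain ⟨F, hF, hflat⟩ := exists_flat_mem_unitaryGroup ι
  have hd : (Fintype.card ι : ℝ) ≠ 0 := Nat.cast_ne_zero.mpr Fintype.card_ne_zero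
  have haverage : 𝔼 θ : ι → ZMod 3,
      Fintype.card ι * ∑ m, purity (block (localConj (F * diagonal (phase θ)) ρ) m m) =
        purity (traceLeft ρ) + purity ρ - ∑ i, purity (block ρ i i) := by
    have := congr(($(expect_sum_blockMoment_flat_mul_phase hflat ρ)).re)
    rw [← trace_mul_self_eq_sum_blockMoment, ← trace_traceLeft_mul_self_eq_sum_blockMoment,
      re_expect, ← Complex.ofReal_natCast, ← Complex.ofReal_inv, Complex.re_ofReal_mul] at this
    simp only [Complex.re_sum, Complex.sub_re, Complex.add_re] at this
    rw [← Finset.mul_expect, ← mul_inv_cancel_left₀ hd (_ - _)]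
    exact congr(_ * $this)
  have hdiag : 0 ≤ ∑ i, purity (block ρ i i) :=
    Finset.sum_nonneg fun i _ ↦ purity_nonneg (isHermitian_block hρ i)
  obtain ⟨θ, -, hθ⟩ := Finset.exists_le_of_expect_le Finset.univ_nonempty
    (haverage.trans_le (sub_le_self _ hdiag))
  exact ⟨_, mul_mem hF (diagonal_phase_mem_unitaryGroup θ), hθ⟩

end FlatUnitary

section Decoupling

open scoped BigOperators

variable {ι₁ ι₂ κ : Type*} [Fintype ι₁] [DecidableEq ι₁] [Fintype ι₂] [DecidableEq ι₂]
  [Fintype κ] [DecidableEq κ]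

lemma expect_trace_traceLeftLeft_localConj_phase
    (ρ : Matrix ((ι₁ × ι₂) × κ) ((ι₁ × ι₂) × κ) ℂ) :
    𝔼 θ : ι₁ × ι₂ → ZMod 3, (traceLeftLeft (localConj (diagonal (phase θ)) ρ) *
        traceLeftLeft (localConj (diagonal (phase θ)) ρ)).trace =
      ∑ i, ∑ j, (if i.2 = j.2 then blockMoment ρ i j i j else 0) +
        ∑ i, ∑ j, (if i.1 = j.1 then blockMoment ρ i j j i else 0) -
        ∑ i, blockMoment ρ i i i i := by
  have hite (i j : ι₁ × ι₂) :
      (if s(i, j) = s((i.1, j.2), (j.1, i.2)) then blockMoment ρ i j (i.1, j.2) (j.1, i.2) else 0) =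
        (if i.2 = j.2 then blockMoment ρ i j i j else 0) +
          (if i.1 = j.1 then blockMoment ρ i j j i else 0) -
          if i = j then blockMoment ρ i j i j else 0 := by
    obtain ⟨i₁, i₂⟩ := i
    obtain ⟨j₁, j₂⟩ := j
    by_cases h₁ : i₁ = j₁ <;> by_cases h₂ : i₂ = j₂ <;> simp [h₁, h₂, Ne.symm]
  simp_rw [trace_traceLeftLeft_mul_self_eq_sum_blockMoment, Finset.expect_sum_comm,
    expect_blockMoment_localConj_phase, hite, Finset.sum_sub_distrib, Finset.sum_add_distrib]
  simp

/-- The ratio `(card ι₁ - 1) / (D - 1)` is the probability that two random distinct elements of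
`ι₁ × ι₂` share their second component. -/
lemma expect_purity_traceLeftLeft_localConj (ρ : Matrix ((ι₁ × ι₂) × κ) ((ι₁ × ι₂) × κ) ℂ)
    {D δ : ℝ} (hD : D = Fintype.card ι₁ * Fintype.card ι₂)
    (hδ : δ = ∑ i, purity (block ρ i i)) :
    𝔼 π : Equiv.Perm (ι₁ × ι₂), 𝔼 θ : ι₁ × ι₂ → ZMod 3,
        purity (traceLeftLeft (localConj (diagonal (phase θ) * π.permMatrix ℂ) ρ)) =
      δ + D * (Fintype.card ι₁ - 1) * ((purity (traceLeft ρ) - δ) / (D * (D - 1))) +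
        D * (Fintype.card ι₂ - 1) * ((purity ρ - δ) / (D * (D - 1))) := by
  have hphase (π : Equiv.Perm (ι₁ × ι₂)) :
      𝔼 θ : ι₁ × ι₂ → ZMod 3,
        purity (traceLeftLeft (localConj (diagonal (phase θ) * π.permMatrix ℂ) ρ)) =
      ∑ i, ∑ j, (if i.2 = j.2 then (blockMoment ρ (π i) (π j) (π i) (π j)).re else 0) +
        ∑ i, ∑ j, (if i.1 = j.1 then (blockMoment ρ (π i) (π j) (π j) (π i)).re else 0) - δ := by
    simp_rw [localConj_mul, purity, ← re_expect, expect_trace_traceLeftLeft_localConj_phase,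
      blockMoment_localConj_permMatrix]
    rw [Equiv.sum_comp π fun i ↦ blockMoment ρ i i i i]
    simp [apply_ite, hδ, purity, blockMoment]
  have hcard : (Fintype.card (ι₁ × ι₂) : ℝ) = D := by
    rw [Fintype.card_prod, Nat.cast_mul, hD]
  have hcount₁ : ∑ i : ι₁ × ι₂, ∑ j : ι₁ × ι₂, (if i.1 = j.1 then (1 : ℝ) else 0) =
      D * Fintype.card ι₂ := by
    simp_rw [Fintype.sum_prod_type_right, Finset.sum_ite_eq, Finset.mem_univ, if_true]
    simp [hD, mul_comm, mul_left_comm]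
  have hcount₂ : ∑ i : ι₁ × ι₂, ∑ j : ι₁ × ι₂, (if i.2 = j.2 then (1 : ℝ) else 0) =
      D * Fintype.card ι₁ := by
    simp_rw [Fintype.sum_prod_type, Finset.sum_ite_eq, Finset.mem_univ, if_true]
    simp [hD, mul_comm]
  have hδ' : ∑ i, (blockMoment ρ i i i i).re = δ := hδ.symm
  simp_rw [hphase, Finset.expect_sub_distrib, Finset.expect_add_distrib]
  rw [expect_perm_sum_sum_ite (fun i j : ι₁ × ι₂ ↦ i.2 = j.2) (fun _ ↦ rfl)
      fun i j ↦ (blockMoment ρ i j i j).re,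
    expect_perm_sum_sum_ite (fun i j : ι₁ × ι₂ ↦ i.1 = j.1) (fun _ ↦ rfl)
      fun i j ↦ (blockMoment ρ i j j i).re, Fintype.expect_const, hcount₁, hcount₂, hcard, hδ',
    purity, purity, trace_mul_self_eq_sum_blockMoment ρ,
    trace_traceLeft_mul_self_eq_sum_blockMoment]
  simp only [Complex.re_sum]
  ring

lemma perm_average_le {D d₁ d₂ a b δ : ℝ} (hD : D = d₁ * d₂) (hd₁ : 1 ≤ d₁) (hd₂ : 1 ≤ d₂)
    (ha : 0 ≤ a) (hb : 0 ≤ b) (hδ : D * δ ≤ a + b) :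
    δ + D * (d₁ - 1) * ((a - δ) / (D * (D - 1))) + D * (d₂ - 1) * ((b - δ) / (D * (D - 1))) ≤
      a / d₂ + b / d₁ := by
  obtain h | h := (hD ▸ one_le_mul_of_one_le_of_one_le hd₁ hd₂ : 1 ≤ D).eq_or_lt
  · obtain rfl : d₁ = 1 := by nlinarith
    obtain rfl : d₂ = 1 := by linarith
    simpa [← h] using hδ
  · have hD₀ : 0 < D := one_pos.trans h
    have hD₁ : 0 < D - 1 := sub_pos.mpr h
    have : 0 ≤ (d₁ - 1) * (d₂ - 1) :=
      mul_nonneg (sub_nonneg.mpr hd₁) (sub_nonneg.mpr hd₂)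
    have hfrac : a / d₂ + b / d₁ = (d₁ * a + d₂ * b) / D := by
      rw [hD]
      field_simp
    rw [hfrac, le_div_iff₀ hD₀, ← mul_le_mul_iff_left₀ hD₁]
    calc _ = D * (δ * (D - 1) + (d₁ - 1) * (a - δ) + (d₂ - 1) * (b - δ)) := by field_simp
      _ = (d₁ - 1) * (d₂ - 1) * (D * δ) + D * ((d₁ - 1) * a + (d₂ - 1) * b) := by rw [hD]; ring
      _ ≤ (d₁ - 1) * (d₂ - 1) * (a + b) + D * ((d₁ - 1) * a + (d₂ - 1) * b) := by gcongr
      _ ≤ (d₁ * a + d₂ * b) * (D - 1) := by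
        rw [hD]
        nlinarith [mul_nonneg (sub_nonneg.mpr hd₂) ha, mul_nonneg (sub_nonneg.mpr hd₁) hb]

theorem exists_purity_traceLeftLeft_localConj_le [Nonempty ι₁] [Nonempty ι₂]
    {ρ : Matrix ((ι₁ × ι₂) × κ) ((ι₁ × ι₂) × κ) ℂ} (hρ : ρ.IsHermitian) :
    ∃ U ∈ unitaryGroup (ι₁ × ι₂) ℂ, purity (traceLeftLeft (localConj U ρ)) ≤
      purity (traceLeft ρ) / Fintype.card ι₂ + purity ρ / Fintype.card ι₁ := by
  obtain ⟨F, hF, hblocks⟩ := exists_sum_purity_block_localConj_le hρ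
  rw [Fintype.card_prod, Nat.cast_mul] at hblocks
  have haverage := (expect_purity_traceLeftLeft_localConj (localConj F ρ) rfl rfl).trans_le <|
    perm_average_le rfl (Nat.one_le_cast.mpr Fintype.card_pos)
      (Nat.one_le_cast.mpr Fintype.card_pos)
      (purity_nonneg (isHermitian_traceLeft (isHermitian_localConj hρ F)))
      (purity_nonneg (isHermitian_localConj hρ F))
      (by rwa [traceLeft_localConj hF, purity_localConj hF])
  rw [traceLeft_localConj hF, purity_localConj hF] at haverage
  obtain ⟨π, -, hπ⟩ := Finset.exists_le_of_expect_le Finset.univ_nonempty haverage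
  obtain ⟨θ, -, hθ⟩ := Finset.exists_le_of_expect_le Finset.univ_nonempty hπ
  refine ⟨_, mul_mem (mul_mem (diagonal_phase_mem_unitaryGroup θ) ?_) hF,
    (localConj_mul _ F ρ).symm ▸ hθ⟩
  rw [mem_unitaryGroup_iff, star_eq_conjTranspose, conjTranspose_permMatrix, ← permMatrix_mul,
    inv_mul_cancel, permMatrix_one]

lemma exists_purity_traceLeftLeft_localConj_sub_le [Nonempty ι₁] [Nonempty ι₂]
    {ρ : Matrix ((ι₁ × ι₂) × κ) ((ι₁ × ι₂) × κ) ℂ} (hρ : ρ.IsHermitian) :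
    ∃ U ∈ unitaryGroup (ι₁ × ι₂) ℂ,
      purity (traceLeftLeft (localConj U ρ) - (Fintype.card ι₂ : ℂ)⁻¹ • (1 ⊗ₖ traceLeft ρ)) ≤
        purity ρ / Fintype.card ι₁ := by
  obtain ⟨U, hU, hle⟩ := exists_purity_traceLeftLeft_localConj_le hρ
  have hreduced : traceLeft (traceLeftLeft (localConj U ρ)) = traceLeft ρ := by
    rw [traceLeft_traceLeftLeft, traceLeft_localConj hU]
  refine ⟨U, hU, ?_⟩
  rw [← hreduced, purity_sub_smul_one_kronecker, hreduced]
  exact sub_le_iff_le_add'.mpr hle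

end Decoupling

section Coefficients

variable {ιA ιR ιB ι₁ ι₂ ιQ ιT : Type}

/-- The coefficients of a vector on `R × (A × B)`, as an operator from `B` to `A × R`. -/
def coeffMatrix (ψ : ιR × (ιA × ιB) → ℂ) : Matrix (ιA × ιR) ιB ℂ :=
  of fun p b ↦ ψ (p.2, (p.1, b))

/-- The coefficients of a vector on `R × ((A₁ × A₂) × B)`, across the cut `A₂R : A₁B`. -/
def splitCoeffMatrix (ψ : ιR × ((ι₁ × ι₂) × ιB) → ℂ) : Matrix (ι₂ × ιR) (ι₁ × ιB) ℂ :=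
  of fun p q ↦ ψ (p.2, ((q.1, p.1), q.2))

/-- The coefficients of a vector on `(R × Q) × (A₂ × B̃)`, across the cut `A₂R : QB̃`. -/
def outCoeffMatrix (u : (ιR × ιQ) × (ι₂ × ιT) → ℂ) : Matrix (ι₂ × ιR) (ιQ × ιT) ℂ :=
  of fun p q ↦ u ((p.2, q.1), (p.1, q.2))

/-- The action of an operator on the `A` factor of a vector on `R × (A × B)`. -/
def actA [Fintype ιA] (U : Matrix ιA ιA ℂ) (ψ : ιR × (ιA × ιB) → ℂ) : ιR × (ιA × ιB) → ℂ :=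
  fun p ↦ ∑ a, U p.2.1 a * ψ (p.1, (a, p.2.2))

/-- The vector `ψ ⊗ Φ` which the protocol aims at. -/
noncomputable def targetVec (ι₂ : Type*) [Fintype ι₂] [DecidableEq ι₂] {ι : Type*} (ψ : ι → ℂ) :
    ι × (ι₂ × ι₂) → ℂ :=
  fun p ↦ ψ p.1 * maxEntVec ι₂ p.2

lemma coeffMatrix_mul_conjTranspose [Fintype ιB] (ψ : ιR × (ιA × ιB) → ℂ) :
    coeffMatrix ψ * (coeffMatrix ψ)ᴴ = redAR ψ :=
  rfl

lemma isHermitian_redAR [Fintype ιB] (ψ : ιR × (ιA × ιB) → ℂ) : (redAR ψ).IsHermitian :=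
  coeffMatrix_mul_conjTranspose ψ ▸ isHermitian_mul_conjTranspose_self _

lemma traceLeft_redAR [Fintype ιA] [Fintype ιB] (ψ : ιR × (ιA × ιB) → ℂ) :
    traceLeft (redAR ψ) = redR ψ := by
  ext r s
  simp [traceLeft, block, redAR, redR, Matrix.sum_apply, Fintype.sum_prod_type]

lemma coeffMatrix_actA [Fintype ιR] [DecidableEq ιR] [Fintype ιA] (U : Matrix ιA ιA ℂ)
    (ψ : ιR × (ιA × ιB) → ℂ) :
    coeffMatrix (actA U ψ) = (U ⊗ₖ (1 : Matrix ιR ιR ℂ)) * coeffMatrix ψ := by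
  ext p b
  simp [coeffMatrix, actA, Matrix.mul_apply, one_apply, Fintype.sum_prod_type]

lemma redAR_actA [Fintype ιR] [DecidableEq ιR] [Fintype ιA] [Fintype ιB] (U : Matrix ιA ιA ℂ)
    (ψ : ιR × (ιA × ιB) → ℂ) : redAR (actA U ψ) = localConj U (redAR ψ) := by
  rw [← coeffMatrix_mul_conjTranspose, ← coeffMatrix_mul_conjTranspose, coeffMatrix_actA,
    conjTranspose_mul, localConj]
  simp only [Matrix.mul_assoc]

lemma splitCoeffMatrix_mul_conjTranspose [Fintype ι₁] [Fintype ιB]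
    (ψ : ιR × ((ι₁ × ι₂) × ιB) → ℂ) :
    splitCoeffMatrix ψ * (splitCoeffMatrix ψ)ᴴ = traceLeftLeft (redAR ψ) := by
  ext p q
  simp [splitCoeffMatrix, redAR, traceLeftLeft, traceLeft, block, Matrix.mul_apply,
    Matrix.sum_apply, Fintype.sum_prod_type]

lemma trace_redR [Fintype ιR] [Fintype ιA] [Fintype ιB] (ψ : ιR × (ιA × ιB) → ℂ) :
    (redR ψ).trace = star ψ ⬝ᵥ ψ := by
  simp [Matrix.trace, redR, dotProduct, Fintype.sum_prod_type, mul_comm]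

lemma star_dotProduct_eq_trace_outCoeffMatrix [Fintype ιR] [Fintype ιQ] [Fintype ι₂] [Fintype ιT]
    (v u : (ιR × ιQ) × (ι₂ × ιT) → ℂ) :
    star v ⬝ᵥ u = ((outCoeffMatrix v)ᴴ * outCoeffMatrix u).trace := by
  let e : (ιR × ιQ) × (ι₂ × ιT) ≃ (ιQ × ιT) × (ι₂ × ιR) :=
    ((Equiv.prodProdProdComm ιR ιQ ι₂ ιT).trans (Equiv.prodComm _ _)).trans
      ((Equiv.refl _).prodCongr (Equiv.prodComm _ _))
  simp only [dotProduct, Matrix.trace, diag_apply, Matrix.mul_apply, conjTranspose_apply]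
  rw [← Fintype.sum_prod_type']
  exact Fintype.sum_equiv e _ _ fun _ ↦ rfl

lemma outCoeffMatrix_targetVec_mul_conjTranspose [Fintype ιA] [Fintype ιB] [Fintype ι₂]
    [DecidableEq ι₂] (ψ : ιR × (ιA × ιB) → ℂ) :
    outCoeffMatrix (targetVec ι₂ ψ) * (outCoeffMatrix (targetVec ι₂ ψ))ᴴ =
      (Fintype.card ι₂ : ℂ)⁻¹ • (1 ⊗ₖ redR ψ) := by
  ext ⟨a, r⟩ ⟨b, s⟩
  obtain rfl | hab := eq_or_ne a b
  · simp [outCoeffMatrix, targetVec, maxEntVec, redR, Matrix.mul_apply, Fintype.sum_prod_type,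
      Finset.mul_sum, ← inv_sqrt_natCast_mul_self, mul_assoc, mul_comm, mul_left_comm]
  · simp [outCoeffMatrix, targetVec, maxEntVec, Matrix.mul_apply, Fintype.sum_prod_type, hab,
      hab.symm]

lemma outCoeffMatrix_fqswMap_mulVec [Fintype ιR] [DecidableEq ιR] [Fintype ι₁] [Fintype ι₂]
    [Fintype ιB] (U : Matrix (ι₁ × ι₂) (ι₁ × ι₂) ℂ)
    (V : Matrix (((ι₁ × ι₂) × ιB) × ι₂) (ι₁ × ιB) ℂ) (ψ : ιR × ((ι₁ × ι₂) × ιB) → ℂ) :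
    outCoeffMatrix (fqswMap U V *ᵥ ψ) = splitCoeffMatrix (actA U ψ) * Vᵀ := by
  ext ⟨a, r⟩ q
  calc outCoeffMatrix (fqswMap U V *ᵥ ψ) (a, r) q
      = ∑ j, ∑ b, (∑ a₁, V q (a₁, b) * U (a₁, a) j) * ψ (r, (j, b)) := by
        rw [← Fintype.sum_prod_type']
        simp only [outCoeffMatrix, fqswMap, mulVec, dotProduct, of_apply, ite_mul, zero_mul]
        rw [Fintype.sum_prod_type, Finset.sum_comm]
        simp only [Finset.sum_ite_eq, Finset.mem_univ, if_true]
    _ = ∑ a₁, ∑ b, (∑ j, U (a₁, a) j * ψ (r, (j, b))) * V q (a₁, b) := by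
        simp_rw [Finset.sum_mul]
        rw [Finset.sum_comm_cycle]
        refine Finset.sum_congr rfl fun a₁ _ ↦ Finset.sum_comm.trans ?_
        refine Finset.sum_congr rfl fun b _ ↦ Finset.sum_congr rfl fun j _ ↦ ?_
        ring
    _ = (splitCoeffMatrix (actA U ψ) * Vᵀ) (a, r) q := by
        rw [Matrix.mul_apply, Fintype.sum_prod_type]
        rfl

lemma pureState_kronecker_maxEntState [Fintype ι₂] [DecidableEq ι₂] {ι : Type*} (ψ : ι → ℂ) :
    pureState ψ ⊗ₖ maxEntState ι₂ = pureState (targetVec ι₂ ψ) := by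
  ext p q
  simp [pureState, maxEntState, targetVec, vecMulVec_apply, mul_mul_mul_comm]

lemma mul_pureState_mul_conjTranspose {m n : Type*} [Fintype n] (M : Matrix m n ℂ) (ψ : n → ℂ) :
    M * pureState ψ * Mᴴ = pureState (M *ᵥ ψ) := by
  rw [pureState, pureState, mul_vecMulVec, vecMulVec_mul, star_mulVec]

end Coefficients

section Protocol

variable {ιR ι₁ ι₂ ιB : Type} [Fintype ιR] [Fintype ι₁] [DecidableEq ι₁] [Fintype ι₂]
  [DecidableEq ι₂] [Fintype ιB]

lemma trace_splitCoeffMatrix_actA_mul_conjTranspose {U : Matrix (ι₁ × ι₂) (ι₁ × ι₂) ℂ}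
    (hU : U ∈ unitaryGroup (ι₁ × ι₂) ℂ) (ψ : ιR × ((ι₁ × ι₂) × ιB) → ℂ) :
    (splitCoeffMatrix (actA U ψ) * (splitCoeffMatrix (actA U ψ))ᴴ).trace = star ψ ⬝ᵥ ψ := by
  classical
  rw [splitCoeffMatrix_mul_conjTranspose, redAR_actA, ← trace_traceLeft, traceLeft_traceLeftLeft,
    traceLeft_localConj hU, traceLeft_redAR, trace_redR]

lemma trace_outCoeffMatrix_targetVec_mul_conjTranspose [Nonempty ι₂] {ιA : Type} [Fintype ιA]
    (ψ : ιR × (ιA × ιB) → ℂ) :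
    (outCoeffMatrix (targetVec ι₂ ψ) * (outCoeffMatrix (targetVec ι₂ ψ))ᴴ).trace = star ψ ⬝ᵥ ψ := by
  rw [outCoeffMatrix_targetVec_mul_conjTranspose, trace_smul, trace_kronecker, trace_one,
    trace_redR, smul_eq_mul, inv_mul_cancel_left₀ (Nat.cast_ne_zero.mpr Fintype.card_ne_zero)]

theorem exists_isometry_traceNorm_fqswMap_sub_le [DecidableEq ιR] [DecidableEq ιB] [Nonempty ι₂]
    {U : Matrix (ι₁ × ι₂) (ι₁ × ι₂) ℂ} (hU : U ∈ unitaryGroup (ι₁ × ι₂) ℂ)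
    {ψ : ιR × ((ι₁ × ι₂) × ιB) → ℂ} (hψ : star ψ ⬝ᵥ ψ = 1) :
    ∃ V : Matrix (((ι₁ × ι₂) × ιB) × ι₂) (ι₁ × ιB) ℂ, Vᴴ * V = 1 ∧
      traceNorm (fqswMap (ιR := ιR) U V * pureState ψ * (fqswMap (ιR := ιR) U V)ᴴ -
          pureState ψ ⊗ₖ maxEntState ι₂) ≤
        2 * √√(Fintype.card (ι₂ × ιR) * purity (traceLeftLeft (localConj U (redAR ψ)) -
          (Fintype.card ι₂ : ℂ)⁻¹ • (1 ⊗ₖ redR ψ))) := by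
  set X := splitCoeffMatrix (actA U ψ)
  set Y := outCoeffMatrix (targetVec ι₂ ψ)
  have hX : (X * Xᴴ).trace = 1 := (trace_splitCoeffMatrix_actA_mul_conjTranspose hU ψ).trans hψ
  have hY : (Y * Yᴴ).trace = 1 := (trace_outCoeffMatrix_targetVec_mul_conjTranspose ψ).trans hψ
  have hcard : Fintype.card (ι₁ × ιB) ≤ Fintype.card (((ι₁ × ι₂) × ιB) × ι₂) := by
    let a : ι₂ := Classical.arbitrary ι₂
    refine Fintype.card_le_of_injective (fun p ↦ (((p.1, a), p.2), a)) fun p q h ↦ ?_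
    simpa [Prod.ext_iff] using h
  obtain ⟨W, hW, hoverlap⟩ := exists_coisometry_overlap_ge hcard hX hY
  set u := fqswMap U Wᵀ *ᵥ ψ
  have hu : outCoeffMatrix u = X * W := outCoeffMatrix_fqswMap_mulVec U Wᵀ ψ
  have hunorm : star u ⬝ᵥ u = 1 := by
    rw [star_dotProduct_eq_trace_outCoeffMatrix, hu, conjTranspose_mul, trace_mul_comm,
      Matrix.mul_assoc, ← Matrix.mul_assoc W, hW, Matrix.one_mul, hX]
  have hvnorm : star (targetVec ι₂ ψ) ⬝ᵥ targetVec ι₂ ψ = 1 := by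
    rw [star_dotProduct_eq_trace_outCoeffMatrix, trace_mul_comm, hY]
  refine ⟨Wᵀ, by
    rw [conjTranspose_transpose_eq_transpose_conjTranspose, ← transpose_mul, hW, transpose_one], ?_⟩
  rw [mul_pureState_mul_conjTranspose, pureState_kronecker_maxEntState, ← redAR_actA,
    ← splitCoeffMatrix_mul_conjTranspose, ← outCoeffMatrix_targetVec_mul_conjTranspose]
  refine (traceNorm_pureState_sub_le hunorm hvnorm).trans ?_
  gcongr
  have hfidelity := hoverlap.trans (Complex.re_le_norm _)
  rw [← hu, ← star_dotProduct_eq_trace_outCoeffMatrix] at hfidelity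
  linarith [sq_nonneg (1 - ‖star (targetVec ι₂ ψ) ⬝ᵥ u‖)]

end Protocol

section Bound

variable {ιA ιR ιB : Type} [Fintype ιB]

lemma isHermitian_redA [Fintype ιR] (ψ : ιR × (ιA × ιB) → ℂ) : (redA ψ).IsHermitian := by
  ext i j
  simp [redA, mul_comm]

variable [Fintype ιA]

lemma isHermitian_redR (ψ : ιR × (ιA × ιB) → ℂ) : (redR ψ).IsHermitian :=
  traceLeft_redAR ψ ▸ isHermitian_traceLeft (isHermitian_redAR ψ)

lemma sqrt_sqrt_eq_rpow {x : ℝ} (hx : 0 ≤ x) : √√x = x ^ ((1 : ℝ) / 4) := by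
  rw [Real.sqrt_eq_rpow, Real.sqrt_eq_rpow, ← Real.rpow_mul hx]
  norm_num

lemma mul_div_mul_purity_redAR_le [Fintype ιR] (ψ : ιR × (ιA × ιB) → ℂ) {x y : ℝ}
    (hx : 0 ≤ x) (hy : 0 ≤ y) (z : ℝ) :
    x * y / z ^ 2 * purity (redAR ψ) ≤
      2 * x * y / z ^ 2 * (purity (redAR ψ) + 2 * purity (redA ψ) * purity (redR ψ)) := by
  have hAR : 0 ≤ purity (redAR ψ) := purity_nonneg (isHermitian_redAR ψ)
  have hA : 0 ≤ purity (redA ψ) := purity_nonneg (isHermitian_redA ψ)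
  have hR : 0 ≤ purity (redR ψ) := purity_nonneg (isHermitian_redR ψ)
  gcongr
  · exact le_mul_of_one_le_left hx one_le_two
  · exact le_add_of_nonneg_right (by positivity)

end Bound

theorem one_shot_FQSW_general
    {ιR ιA₁ ιA₂ ιB : Type}
    [Fintype ιR] [DecidableEq ιR] [Fintype ιA₁] [DecidableEq ιA₁]
    [Fintype ιA₂] [DecidableEq ιA₂] [Fintype ιB] [DecidableEq ιB]
    (ψ : ιR × ((ιA₁ × ιA₂) × ιB) → ℂ)
    (hψ : star ψ ⬝ᵥ ψ = 1) :
    ∃ (U : Matrix (ιA₁ × ιA₂) (ιA₁ × ιA₂) ℂ)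
      (V : Matrix (((ιA₁ × ιA₂) × ιB) × ιA₂) (ιA₁ × ιB) ℂ),
      U ∈ Matrix.unitaryGroup (ιA₁ × ιA₂) ℂ ∧ Vᴴ * V = 1 ∧
      traceNorm (fqswMap (ιR := ιR) U V * pureState ψ * (fqswMap (ιR := ιR) U V)ᴴ -
          pureState ψ ⊗ₖ maxEntState ιA₂) ≤
        2 * ((Fintype.card ιA₁ * Fintype.card ιA₂ : ℝ) * (Fintype.card ιR : ℝ)
            / (Fintype.card ιA₁ : ℝ) ^ 2 * purity (redAR ψ)) ^ ((1 : ℝ) / 4) := by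
  have hne : Nonempty (ιR × ((ιA₁ × ιA₂) × ιB)) := by
    by_contra! h
    simp [dotProduct] at hψ
  simp only [nonempty_prod] at hne
  obtain ⟨-, ⟨_, _⟩, -⟩ := hne
  obtain ⟨U, hU, hdecoupled⟩ :=
    exists_purity_traceLeftLeft_localConj_sub_le (isHermitian_redAR ψ)
  rw [traceLeft_redAR] at hdecoupled
  obtain ⟨V, hV, hdistance⟩ := exists_isometry_traceNorm_fqswMap_sub_le hU hψ
  have hAR : 0 ≤ purity (redAR ψ) := purity_nonneg (isHermitian_redAR ψ)
  have hcard : (Fintype.card ιA₁ : ℝ) ≠ 0 := Nat.cast_ne_zero.mpr Fintype.card_ne_zero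
  have hbound : (Fintype.card (ιA₂ × ιR) : ℝ) * (purity (redAR ψ) / Fintype.card ιA₁) =
      (Fintype.card ιA₁ * Fintype.card ιA₂ : ℝ) * Fintype.card ιR / (Fintype.card ιA₁ : ℝ) ^ 2 *
        purity (redAR ψ) := by
    rw [Fintype.card_prod, Nat.cast_mul]
    field_simp
  refine ⟨U, V, hU, hV, hdistance.trans ?_⟩
  rw [← sqrt_sqrt_eq_rpow (by positivity), ← hbound]
  gcongr

/-- **Theorem 1: one-shot fully quantum Slepian–Wolf.**  For a pure state `ψ` on
`R ⊗ (A₁⊗A₂) ⊗ B` there are a unitary `U` on `A = A₁ ⊗ A₂`, a space `B̃` of dimension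
`d_{A₂}` (a copy of `A₂`), and an isometry `V : A₁ ⊗ B → (A ⊗ B) ⊗ B̃` such that, after
reordering tensor factors,
`‖ (V∘U) ψ (V∘U)† − ψ^{R(AB)} ⊗ Φ^{A₂B̃} ‖₁
   ≤ 2 [ (2 d_A d_R / d_{A₁}²) ( Tr[(ψ^{AR})²] + 2 Tr[(ψ^A)²] Tr[(ψ^R)²] ) ]^{1/4}`,
where `ψ^{R(AB)}` is `ψ` itself, regarded as a pure state on `R ⊗ (A⊗B)`. -/
theorem one_shot_FQSW
    {ιR ιA₁ ιA₂ ιB : Type}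
    [Fintype ιR] [DecidableEq ιR] [Fintype ιA₁] [DecidableEq ιA₁]
    [Fintype ιA₂] [DecidableEq ιA₂] [Fintype ιB] [DecidableEq ιB]
    (ψ : ιR × ((ιA₁ × ιA₂) × ιB) → ℂ)
    (hψ : star ψ ⬝ᵥ ψ = 1) :
    ∃ (U : Matrix (ιA₁ × ιA₂) (ιA₁ × ιA₂) ℂ)
      (V : Matrix (((ιA₁ × ιA₂) × ιB) × ιA₂) (ιA₁ × ιB) ℂ),
      U ∈ Matrix.unitaryGroup (ιA₁ × ιA₂) ℂ ∧ Vᴴ * V = 1 ∧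
      traceNorm
          (fqswMap (ιR := ιR) U V * pureState ψ * (fqswMap (ιR := ιR) U V)ᴴ - pureState ψ ⊗ₖ maxEntState ιA₂)
        ≤ 2 * ((2 * (Fintype.card ιA₁ * Fintype.card ιA₂ : ℝ) * (Fintype.card ιR : ℝ)
              / (Fintype.card ιA₁ : ℝ) ^ 2)
            * (purity (redAR ψ) + 2 * purity (redA ψ) * purity (redR ψ)))
            ^ ((1 : ℝ) / 4) := by
  obtain ⟨U, V, hU, hV, hdistance⟩ := one_shot_FQSW_general ψ hψ
  have hAR : 0 ≤ purity (redAR ψ) := purity_nonneg (isHermitian_redAR ψ)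
  refine ⟨U, V, hU, hV, hdistance.trans ?_⟩
  gcongr 2 * ?_ ^ _
  exact mul_div_mul_purity_redAR_le ψ (by positivity) (by positivity) _
end

section
/- Let A = A₁⊗A₂ and R be finite-dimensional Hilbert spaces with duplicate copies A' = A₁'⊗A₂' and R'. Then, as operators on (A⊗R)⊗(A'⊗R') ≅ (A⊗A')⊗(R⊗R'), ∫_{U(A)} (U†⊗U†⊗I^{RR'}) (F^{A₂} ⊗ F^R) (U⊗U⊗I^{RR'}) dU = ( p Π₊^A + q Π₋^A ) ⊗ F^R, where F^{A₂} is regarded as I^{A₁A₁'}⊗F^{A₂} on A⊗A', p = (d_{A₁}+d_{A₂})/(d_A+1) and q = (d_{A₁}−d_{A₂})/(d_A−1), assuming d_A ≥ 2. -/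
open Matrix MeasureTheory
open scoped Kronecker ComplexOrder

noncomputable instance matMeas {m n : Type*} : MeasurableSpace (Matrix m n ℂ) :=
  (inferInstance : MeasurableSpace (m → n → ℂ))

/-- The swap operator `F^X` on `X ⊗ X'` (with `X' ≅ X`). -/
noncomputable def swapMat (α : Type*) [DecidableEq α] : Matrix (α × α) (α × α) ℂ :=
  Matrix.of fun i j => if i.1 = j.2 ∧ i.2 = j.1 then 1 else 0

/-- The operator `I^{A₁A₁'} ⊗ F^{A₂}` on `A ⊗ A'` for `A = A₁ ⊗ A₂`, i.e. the swap of the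
two `A₂` factors, written on the index ordering `(A₁ × A₂) × (A₁' × A₂')`. -/
noncomputable def swapA2 (α₁ α₂ : Type*) [DecidableEq α₁] [DecidableEq α₂] :
    Matrix ((α₁ × α₂) × (α₁ × α₂)) ((α₁ × α₂) × (α₁ × α₂)) ℂ :=
  Matrix.of fun i j =>
    if i.1.1 = j.1.1 ∧ i.2.1 = j.2.1 ∧ i.1.2 = j.2.2 ∧ i.2.2 = j.1.2 then 1 else 0

/-- `Π₊^A = (I + F^A)/2`, the projector onto the symmetric subspace of `A ⊗ A'`. -/
noncomputable def symProj (α : Type*) [DecidableEq α] : Matrix (α × α) (α × α) ℂ :=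
  (1/2 : ℂ) • ((1 : Matrix (α × α) (α × α) ℂ) + swapMat α)

/-- `Π₋^A = (I − F^A)/2`, the projector onto the antisymmetric subspace of `A ⊗ A'`. -/
noncomputable def antisymProj (α : Type*) [DecidableEq α] : Matrix (α × α) (α × α) ℂ :=
  (1/2 : ℂ) • ((1 : Matrix (α × α) (α × α) ℂ) - swapMat α)

/-!
The commutant of `{V ⊗ V | V unitary}` is spanned by `1` and the swap `F`. Indeed, differentiating
`exp (tA) ⊗ exp (tA)` at `t = 0` shows that an element `C` of the commutant commutes with
`1 ⊗ X + X ⊗ 1` for every matrix `X`, hence with `X ⊗ Y + Y ⊗ X` for all `X` and `Y`, and for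
matrix units `X`, `Y` the entries of this commutation relation give `C = α • 1 + β • F`. The
coefficients are determined by `tr C` and `tr (C F)`.

Left invariance of the measure says that `∫ (U ⊗ U) Y (U ⊗ U)† dU` lies in this commutant, and its
two traces are those of `Y`. The average of `(U† ⊗ U†) X (U ⊗ U)` is the adjoint map for the trace
pairing, so its `(i, j)` entry is obtained by taking for `Y` the matrix unit `E_ji`.
-/

section SwapMat

variable {n : Type*} [DecidableEq n]

lemma swapMat_eq_toMatrix : swapMat n = (Equiv.prodComm n n).toPEquiv.toMatrix := by
  ext i j
  simp [swapMat, PEquiv.toMatrix_apply, Prod.ext_iff, and_comm, eq_comm]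

variable [Fintype n]

lemma mul_swapMat (M : Matrix (n × n) (n × n) ℂ) :
    M * swapMat n = M.submatrix id Prod.swap := by
  rw [swapMat_eq_toMatrix, PEquiv.mul_toMatrix_toPEquiv]
  rfl

lemma swapMat_mul_swapMat : swapMat n * swapMat n = 1 := by
  rw [mul_swapMat]
  ext i j
  simp [swapMat, one_apply, Prod.ext_iff]

lemma commute_swapMat_kronecker_self (M : Matrix n n ℂ) : Commute (swapMat n) (M ⊗ₖ M) := by
  rw [Commute, SemiconjBy, mul_swapMat, swapMat_eq_toMatrix, PEquiv.toMatrix_toPEquiv_mul]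
  ext i j
  simp [mul_comm]

lemma trace_mul_swapMat (M : Matrix (n × n) (n × n) ℂ) :
    (M * swapMat n).trace = ∑ a, ∑ b, M (a, b) (b, a) := by
  simp [mul_swapMat, trace, Fintype.sum_prod_type]

lemma trace_swapMat : (swapMat n).trace = Fintype.card n := by
  simpa [one_apply, eq_comm] using trace_mul_swapMat (1 : Matrix (n × n) (n × n) ℂ)

variable {m : Type*} [Fintype m] [DecidableEq m]

lemma trace_swapA2 : (swapA2 m n).trace = Fintype.card (m × n) * Fintype.card m := by
  simp [trace, swapA2, Fintype.sum_prod_type, eq_comm, -Finset.sum_boole]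

lemma trace_swapA2_mul_swapMat :
    (swapA2 m n * swapMat (m × n)).trace = Fintype.card (m × n) * Fintype.card n := by
  simp [trace_mul_swapMat, swapA2, Fintype.sum_prod_type, eq_comm, -Finset.sum_boole, mul_assoc]

end SwapMat

section Commutant

open scoped Matrix.Norms.L2Operator
open ComplexStarModule

lemma commute_of_hasDerivAt {A : Type*} [NormedRing A] [NormedAlgebra ℝ A] {c f' : A}
    {f : ℝ → A} {t : ℝ} (hf : HasDerivAt f f' t) (h : ∀ s, Commute c (f s)) : Commute c f' :=
  (hf.const_mul c).unique ((hf.mul_const c).congr_of_eventuallyEq (.of_forall h))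

lemma hasDerivAt_kronecker {l m n p : Type*} [Finite l] [Finite m] [Finite n] [Finite p]
    {f : ℝ → Matrix l m ℂ} {g : ℝ → Matrix n p ℂ} {f' : Matrix l m ℂ} {g' : Matrix n p ℂ} {t : ℝ}
    (hf : HasDerivAt f f' t) (hg : HasDerivAt g g' t) :
    HasDerivAt (fun s => f s ⊗ₖ g s) (f t ⊗ₖ g' + f' ⊗ₖ g t) t := by
  classical
  have := Fintype.ofFinite l
  have := Fintype.ofFinite m
  have := Fintype.ofFinite n
  have := Fintype.ofFinite p
  exact (kroneckerBilinear (R := ℝ) (α := ℂ) (l := l) (m := m) (n := n) (p := p)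
    ).toContinuousBilinearMap.hasDerivAt_of_bilinear (fun _ => hf) (fun _ => hg)

variable {n : Type*} [Fintype n] [DecidableEq n] {C : Matrix (n × n) (n × n) ℂ}
  (hC : ∀ V ∈ unitaryGroup n ℂ, Commute C (V ⊗ₖ V))

include hC

lemma commute_one_kronecker_add_of_mem_skewAdjoint {A : Matrix n n ℂ}
    (hA : A ∈ skewAdjoint (Matrix n n ℂ)) :
    Commute C ((1 : Matrix n n ℂ) ⊗ₖ A + A ⊗ₖ (1 : Matrix n n ℂ)) := by
  let +nondep : NormedAlgebra ℚ (Matrix n n ℂ) := .restrictScalars ℚ ℂ _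
  have hexp : HasDerivAt (fun t : ℝ => NormedSpace.exp (t • A)) A 0 := by
    simpa using hasDerivAt_exp_smul_const A (0 : ℝ)
  have hkron := hasDerivAt_kronecker hexp hexp
  simp only [zero_smul, NormedSpace.exp_zero] at hkron
  exact commute_of_hasDerivAt hkron fun t =>
    hC _ (NormedSpace.exp_mem_unitary_of_mem_skewAdjoint (skewAdjoint.smul_mem t hA))

lemma commute_one_kronecker_add_kronecker_one (X : Matrix n n ℂ) :
    Commute C ((1 : Matrix n n ℂ) ⊗ₖ X + X ⊗ₖ (1 : Matrix n n ℂ)) := by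
  have hsa {H : Matrix n n ℂ} (hH : IsSelfAdjoint H) :
      Commute C ((1 : Matrix n n ℂ) ⊗ₖ H + H ⊗ₖ (1 : Matrix n n ℂ)) := by
    have hI := commute_one_kronecker_add_of_mem_skewAdjoint hC
      (hH.I_smul_mem_skewAdjoint (K := ℂ))
    simpa [kronecker_smul, smul_kronecker, ← smul_add, smul_smul] using
      hI.smul_right (-Complex.I)
  have hX := (hsa (ℜ X).2).add_right ((hsa (ℑ X).2).smul_right Complex.I)
  rwa [smul_add, ← kronecker_smul, ← smul_kronecker, add_add_add_comm, ← kronecker_add,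
    ← add_kronecker, realPart_add_I_smul_imaginaryPart] at hX

lemma commute_kronecker_add_kronecker_comm (X Y : Matrix n n ℂ) :
    Commute C (X ⊗ₖ Y + Y ⊗ₖ X) := by
  have hXY : X ⊗ₖ Y + Y ⊗ₖ X =
      ((1 : Matrix n n ℂ) ⊗ₖ X + X ⊗ₖ (1 : Matrix n n ℂ)) *
          ((1 : Matrix n n ℂ) ⊗ₖ Y + Y ⊗ₖ (1 : Matrix n n ℂ)) -
        ((1 : Matrix n n ℂ) ⊗ₖ (X * Y) + (X * Y) ⊗ₖ (1 : Matrix n n ℂ)) := by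
    simp only [mul_add, add_mul, ← mul_kronecker_mul, one_mul, mul_one]
    abel
  rw [hXY]
  exact ((commute_one_kronecker_add_kronecker_one hC X).mul_right
    (commute_one_kronecker_add_kronecker_one hC Y)).sub_right
    (commute_one_kronecker_add_kronecker_one hC (X * Y))

lemma eq_smul_one_add_smul_swapMat {x y : n} (hxy : x ≠ y) :
    C = C (x, y) (x, y) • 1 + C (y, x) (x, y) • swapMat n := by
  ext ⟨a, b⟩ ⟨c, d⟩
  have hentry : C (a, b) (c, d) = (if a = c ∧ b = d then C (x, y) (x, y) else 0) +
      if a = d ∧ b = c then C (y, x) (x, y) else 0 := by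
    simpa [single_kronecker_single, add_mul, mul_apply, single_apply, hxy, ite_and,
      Finset.sum_add_distrib, Finset.sum_ite_irrel, eq_comm] using
      congr_fun₂ (commute_kronecker_add_kronecker_comm hC (single c x 1) (single d y 1)).eq
        (a, b) (x, y)
  simp [hentry, one_apply, swapMat]

theorem eq_smul_symProj_add_smul_antisymProj [Nontrivial n] :
    C = ((C.trace + (C * swapMat n).trace) / (Fintype.card n * (Fintype.card n + 1))) • symProj n +
      ((C.trace - (C * swapMat n).trace) / (Fintype.card n * (Fintype.card n - 1))) •
        antisymProj n := by
  obtain ⟨x, y, hxy⟩ := exists_pair_ne n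
  obtain ⟨α, β, rfl⟩ : ∃ α β : ℂ, C = α • 1 + β • swapMat n :=
    ⟨_, _, eq_smul_one_add_smul_swapMat hC hxy⟩
  have htr : (α • 1 + β • swapMat n).trace =
      α * (Fintype.card n * Fintype.card n) + β * Fintype.card n := by
    simp [trace_swapMat]
  have htr_swap : ((α • 1 + β • swapMat n) * swapMat n).trace =
      α * Fintype.card n + β * (Fintype.card n * Fintype.card n) := by
    simp [add_mul, swapMat_mul_swapMat, trace_swapMat]
  have hd : (Fintype.card n : ℂ) ≠ 0 := Nat.cast_ne_zero.2 Fintype.card_ne_zero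
  have hd_add : (Fintype.card n + 1 : ℂ) ≠ 0 := Nat.cast_add_one_ne_zero _
  have hd_sub : (Fintype.card n - 1 : ℂ) ≠ 0 :=
    sub_ne_zero.2 (Nat.cast_ne_one.2 Fintype.one_lt_card.ne')
  rw [htr, htr_swap, symProj, antisymProj]
  match_scalars
  · field_simp
    ring
  · field_simp
    ring

end Commutant

section Twirl

open scoped Matrix.Norms.L2Operator

instance matrixBorelSpace {m n : Type*} [Finite m] [Finite n] : BorelSpace (Matrix m n ℂ) :=
  inferInstanceAs (BorelSpace (m → n → ℂ))

variable {n : Type*} [Fintype n] [DecidableEq n]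

/-- The representation `U ↦ U ⊗ U` of the unitary group on the tensor square. -/
def tensorSq : unitaryGroup n ℂ →* unitaryGroup (n × n) ℂ where
  toFun U := ⟨(U : Matrix n n ℂ) ⊗ₖ (U : Matrix n n ℂ), kronecker_mem_unitary U.2 U.2⟩
  map_one' := Subtype.ext one_kronecker_one
  map_mul' _ _ := Subtype.ext (mul_kronecker_mul ..)

/-- The action `Y ↦ (U ⊗ U) Y (U ⊗ U)†` of the unitary group on operators on the tensor square.
It takes values in `⋆`-automorphisms, which makes it multiplicative in `U` and isometric in `Y`. -/
noncomputable def tensorSqConj :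
    unitaryGroup n ℂ →* (Matrix (n × n) (n × n) ℂ ≃⋆ₐ[ℂ] Matrix (n × n) (n × n) ℂ) :=
  (Unitary.conjStarAlgAut ℂ (Matrix (n × n) (n × n) ℂ)).comp tensorSq

lemma tensorSqConj_apply (U : unitaryGroup n ℂ) (Y : Matrix (n × n) (n × n) ℂ) :
    tensorSqConj U Y = ((U : Matrix n n ℂ) ⊗ₖ (U : Matrix n n ℂ)) * Y *
      ((U : Matrix n n ℂ) ⊗ₖ (U : Matrix n n ℂ))ᴴ :=
  rfl

lemma continuous_tensorSqConj (Y : Matrix (n × n) (n × n) ℂ) :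
    Continuous fun U : unitaryGroup n ℂ => tensorSqConj U Y := by
  have hentry (i j : n) : Continuous fun U : unitaryGroup n ℂ => (U : Matrix n n ℂ) i j :=
    continuous_subtype_val.matrix_elem i j
  have hsq : Continuous fun U : unitaryGroup n ℂ => (U : Matrix n n ℂ) ⊗ₖ (U : Matrix n n ℂ) :=
    continuous_matrix fun i j => (hentry i.1 j.1).mul (hentry i.2 j.2)
  simp only [tensorSqConj_apply]
  fun_prop

lemma integrable_tensorSqConj (μ : Measure (unitaryGroup n ℂ)) [IsFiniteMeasure μ]
    (Y : Matrix (n × n) (n × n) ℂ) : Integrable (fun U => tensorSqConj U Y) μ :=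
  .of_bound (continuous_tensorSqConj Y).aestronglyMeasurable ‖Y‖ <|
    .of_forall fun U => (StarAlgEquiv.norm_map (tensorSqConj U) Y).le

/-- The twirl `∫ (U ⊗ U) Y (U ⊗ U)† dμ(U)` of `Y` over `μ`, as a Bochner integral of matrices. -/
noncomputable def twirl (μ : Measure (unitaryGroup n ℂ)) (Y : Matrix (n × n) (n × n) ℂ) :
    Matrix (n × n) (n × n) ℂ :=
  ∫ U, tensorSqConj U Y ∂μ

variable {μ : Measure (unitaryGroup n ℂ)}

lemma map_twirl [IsFiniteMeasure μ] {E : Type*} [NormedAddCommGroup E] [NormedSpace ℂ E]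
    [CompleteSpace E] (L : Matrix (n × n) (n × n) ℂ →ₗ[ℂ] E) (Y : Matrix (n × n) (n × n) ℂ) :
    L (twirl μ Y) = ∫ U, L (tensorSqConj U Y) ∂μ :=
  (L.toContinuousLinearMap.integral_comp_comm (integrable_tensorSqConj μ Y)).symm

lemma tensorSqConj_twirl [IsFiniteMeasure μ] [μ.IsMulLeftInvariant] (V : unitaryGroup n ℂ)
    (Y : Matrix (n × n) (n × n) ℂ) : tensorSqConj V (twirl μ Y) = twirl μ Y :=
  calc
    tensorSqConj V (twirl μ Y) = ∫ U, tensorSqConj V (tensorSqConj U Y) ∂μ :=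
      map_twirl (tensorSqConj V).toAlgEquiv.toLinearMap Y
    _ = ∫ U, tensorSqConj (V * U) Y ∂μ := by simp only [map_mul, StarAlgEquiv.mul_apply]
    _ = twirl μ Y := integral_mul_left_eq_self (fun U => tensorSqConj U Y) V

lemma commute_twirl_kronecker_self [IsFiniteMeasure μ] [μ.IsMulLeftInvariant]
    (Y : Matrix (n × n) (n × n) ℂ) {V : Matrix n n ℂ} (hV : V ∈ unitaryGroup n ℂ) :
    Commute (twirl μ Y) (V ⊗ₖ V) := by
  have hconj : (V ⊗ₖ V) * twirl μ Y * (V ⊗ₖ V)ᴴ = twirl μ Y := tensorSqConj_twirl ⟨V, hV⟩ Y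
  have hVV : (V ⊗ₖ V)ᴴ * (V ⊗ₖ V) = 1 := (kronecker_mem_unitary hV hV).1
  calc
    twirl μ Y * (V ⊗ₖ V) = (V ⊗ₖ V) * twirl μ Y * (V ⊗ₖ V)ᴴ * (V ⊗ₖ V) := by rw [hconj]
    _ = (V ⊗ₖ V) * twirl μ Y := by rw [mul_assoc, hVV, mul_one]

lemma trace_tensorSqConj_mul (U : unitaryGroup n ℂ) (Y : Matrix (n × n) (n × n) ℂ)
    {Z : Matrix (n × n) (n × n) ℂ}
    (hZ : Commute Z ((U : Matrix n n ℂ) ⊗ₖ (U : Matrix n n ℂ))) :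
    (tensorSqConj U Y * Z).trace = (Y * Z).trace := by
  let W : Matrix (n × n) (n × n) ℂ := (U : Matrix n n ℂ) ⊗ₖ (U : Matrix n n ℂ)
  have hW : Wᴴ * W = 1 := (kronecker_mem_unitary U.2 U.2).1
  calc
    (W * Y * Wᴴ * Z).trace = (Y * Wᴴ * (Z * W)).trace := by
      rw [mul_assoc W, mul_assoc W, trace_mul_comm, ← mul_assoc]
    _ = (Y * Z).trace := by rw [hZ.eq, mul_assoc, ← mul_assoc Wᴴ, hW, one_mul]

lemma trace_twirl_mul [IsProbabilityMeasure μ] (Y : Matrix (n × n) (n × n) ℂ)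
    {Z : Matrix (n × n) (n × n) ℂ} (hZ : ∀ V ∈ unitaryGroup n ℂ, Commute Z (V ⊗ₖ V)) :
    (twirl μ Y * Z).trace = (Y * Z).trace := by
  simpa [trace_tensorSqConj_mul _ _ (hZ _ (Subtype.prop _))] using
    map_twirl (μ := μ) (traceLinearMap (n × n) ℂ ℂ ∘ₗ LinearMap.mulRight ℂ Z) Y

theorem twirl_eq [Nontrivial n] [IsProbabilityMeasure μ] [μ.IsMulLeftInvariant]
    (Y : Matrix (n × n) (n × n) ℂ) :
    twirl μ Y =
      ((Y.trace + (Y * swapMat n).trace) / (Fintype.card n * (Fintype.card n + 1))) • symProj n +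
      ((Y.trace - (Y * swapMat n).trace) / (Fintype.card n * (Fintype.card n - 1))) •
        antisymProj n := by
  have htr : (twirl μ Y).trace = Y.trace := by
    simpa using trace_twirl_mul (μ := μ) Y fun V _ => Commute.one_left (V ⊗ₖ V)
  have htr_swap : (twirl μ Y * swapMat n).trace = (Y * swapMat n).trace :=
    trace_twirl_mul Y fun V _ => commute_swapMat_kronecker_self V
  rw [eq_smul_symProj_add_smul_antisymProj fun _ => commute_twirl_kronecker_self (μ := μ) Y,
    htr, htr_swap]

lemma integral_conjTranspose_kronecker_conj_apply [IsFiniteMeasure μ]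
    (X : Matrix (n × n) (n × n) ℂ) (i j : n × n) :
    ∫ U : unitaryGroup n ℂ, (((U : Matrix n n ℂ)ᴴ ⊗ₖ (U : Matrix n n ℂ)ᴴ) * X *
      ((U : Matrix n n ℂ) ⊗ₖ (U : Matrix n n ℂ))) i j ∂μ = (X * twirl μ (single j i 1)).trace := by
  have hentry (U : unitaryGroup n ℂ) : (((U : Matrix n n ℂ)ᴴ ⊗ₖ (U : Matrix n n ℂ)ᴴ) * X *
      ((U : Matrix n n ℂ) ⊗ₖ (U : Matrix n n ℂ))) i j =
        (X * tensorSqConj U (single j i 1)).trace := by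
    rw [tensorSqConj_apply, ← mul_assoc, trace_mul_comm, ← mul_assoc, ← mul_assoc,
      trace_mul_single, conjTranspose_kronecker, MulOpposite.op_one, one_smul]
  simpa [hentry] using
    (map_twirl (μ := μ) (traceLinearMap (n × n) ℂ ℂ ∘ₗ LinearMap.mulLeft ℂ X) (single j i 1)).symm

theorem integral_conjTranspose_kronecker_conj_apply_eq [Nontrivial n] [IsProbabilityMeasure μ]
    [μ.IsMulLeftInvariant] (X : Matrix (n × n) (n × n) ℂ) (i j : n × n) :
    ∫ U : unitaryGroup n ℂ, (((U : Matrix n n ℂ)ᴴ ⊗ₖ (U : Matrix n n ℂ)ᴴ) * X *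
      ((U : Matrix n n ℂ) ⊗ₖ (U : Matrix n n ℂ))) i j ∂μ =
      (((X.trace + (X * swapMat n).trace) / (Fintype.card n * (Fintype.card n + 1))) • symProj n +
      ((X.trace - (X * swapMat n).trace) / (Fintype.card n * (Fintype.card n - 1))) •
        antisymProj n) i j := by
  have htr : (single j i (1 : ℂ)).trace = (1 : Matrix (n × n) (n × n) ℂ) i j := by
    simpa using trace_single_mul j i (1 : ℂ) 1
  have htr_swap : (single j i (1 : ℂ) * swapMat n).trace = swapMat n i j := by
    simp only [trace_single_mul, one_smul]
  rw [integral_conjTranspose_kronecker_conj_apply, twirl_eq, htr, htr_swap]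
  simp only [symProj, antisymProj, mul_add, mul_sub, Matrix.mul_smul, mul_one, smul_add, smul_sub,
    trace_add, trace_sub, trace_smul, smul_eq_mul, Matrix.add_apply, Matrix.sub_apply,
    Matrix.smul_apply]
  ring

end Twirl

/-- **Lemma 3 (Schur averaging).** With `A = A₁ ⊗ A₂`, `d_A ≥ 2`,
`∫ (U†⊗U†⊗I^{RR'}) (F^{A₂} ⊗ F^R) (U⊗U⊗I^{RR'}) dU = (p Π₊^A + q Π₋^A) ⊗ F^R`,
where `p = (d_{A₁}+d_{A₂})/(d_A+1)` and `q = (d_{A₁}−d_{A₂})/(d_A−1)`.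
The matrix equality is stated entrywise. -/
theorem schur_average
    {ιA₁ ιA₂ ιR : Type} [Fintype ιA₁] [DecidableEq ιA₁] [Fintype ιA₂] [DecidableEq ιA₂]
    [Fintype ιR] [DecidableEq ιR]
    (hdA : 2 ≤ Fintype.card ιA₁ * Fintype.card ιA₂)
    (μ : Measure (Matrix.unitaryGroup (ιA₁ × ιA₂) ℂ)) [IsProbabilityMeasure μ]
    (hμ : ∀ V : Matrix.unitaryGroup (ιA₁ × ιA₂) ℂ,
      μ.map (fun U : Matrix.unitaryGroup (ιA₁ × ιA₂) ℂ => V * U) = μ) :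
    ∀ i j : ((ιA₁ × ιA₂) × (ιA₁ × ιA₂)) × (ιR × ιR),
      (∫ U : Matrix.unitaryGroup (ιA₁ × ιA₂) ℂ,
          ((((U : Matrix (ιA₁ × ιA₂) (ιA₁ × ιA₂) ℂ)ᴴ ⊗ₖ (U : Matrix (ιA₁ × ιA₂) (ιA₁ × ιA₂) ℂ)ᴴ)
              ⊗ₖ (1 : Matrix (ιR × ιR) (ιR × ιR) ℂ))
            * (swapA2 ιA₁ ιA₂ ⊗ₖ swapMat ιR)
            * (((U : Matrix (ιA₁ × ιA₂) (ιA₁ × ιA₂) ℂ) ⊗ₖ (U : Matrix (ιA₁ × ιA₂) (ιA₁ × ιA₂) ℂ))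
              ⊗ₖ (1 : Matrix (ιR × ιR) (ιR × ιR) ℂ))) i j ∂μ)
      = (((((Fintype.card ιA₁ : ℂ) + (Fintype.card ιA₂ : ℂ)) /
              ((Fintype.card ιA₁ : ℂ) * (Fintype.card ιA₂ : ℂ) + 1)) • symProj (ιA₁ × ιA₂)
          + (((Fintype.card ιA₁ : ℂ) - (Fintype.card ιA₂ : ℂ)) /
              ((Fintype.card ιA₁ : ℂ) * (Fintype.card ιA₂ : ℂ) - 1)) • antisymProj (ιA₁ × ιA₂))
          ⊗ₖ swapMat ιR) i j := by
  intro i j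
  have : μ.IsMulLeftInvariant := ⟨hμ⟩
  have : Nontrivial (ιA₁ × ιA₂) :=
    Fintype.one_lt_card_iff_nontrivial.1 (by rwa [Fintype.card_prod])
  have hd : (Fintype.card (ιA₁ × ιA₂) : ℂ) ≠ 0 := Nat.cast_ne_zero.2 Fintype.card_ne_zero
  simp only [← mul_kronecker_mul, one_mul, mul_one, kroneckerMap_apply _ _ (swapMat ιR)]
  rw [integral_mul_const, integral_conjTranspose_kronecker_conj_apply_eq, trace_swapA2,
    trace_swapA2_mul_swapMat, ← mul_add, ← mul_sub, mul_div_mul_left _ _ hd,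
    mul_div_mul_left _ _ hd, Fintype.card_prod, Nat.cast_mul]
end

section
/- Let ψ^{AR} be a density operator on A⊗R with A = A₁⊗A₂ and d_A ≥ 2. Then ∫_{U(A)} ‖ σ^{A₂R}(U) − σ^{A₂}(U) ⊗ σ^R(U) ‖₂² dU = ((d_{A₁} d_{A₂}² − d_{A₁})/(d_A² − 1)) · ( Tr[(ψ^{AR})²] − 2 Tr[ψ^{AR}(ψ^A⊗ψ^R)] + Tr[(ψ^A)²] Tr[(ψ^R)²] ). -/
open Matrix MeasureTheory
open scoped Kronecker ComplexOrder

/-- Squared Hilbert–Schmidt norm `‖M‖₂² = Tr(Mᴴ M)`. -/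
noncomputable def hsNormSq {n : Type*} [Fintype n] (M : Matrix n n ℂ) : ℝ :=
  (Mᴴ * M).trace.re

/-- `σ^{A₂R}(U) = Tr_{A₁}[(U ⊗ I_R) ψ (U ⊗ I_R)ᴴ]`. -/
noncomputable def sigmaA2R {ιA₁ ιA₂ ιR : Type} [Fintype ιA₁] [Fintype ιA₂] [Fintype ιR]
    [DecidableEq ιR]
    (ψ : Matrix ((ιA₁ × ιA₂) × ιR) ((ιA₁ × ιA₂) × ιR) ℂ)
    (U : Matrix (ιA₁ × ιA₂) (ιA₁ × ιA₂) ℂ) : Matrix (ιA₂ × ιR) (ιA₂ × ιR) ℂ :=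
  Matrix.of fun i j => ∑ a₁ : ιA₁,
    ((U ⊗ₖ (1 : Matrix ιR ιR ℂ)) * ψ * (U ⊗ₖ (1 : Matrix ιR ιR ℂ))ᴴ)
      ((a₁, i.1), i.2) ((a₁, j.1), j.2)

/-- Partial trace over the first tensor factor. -/
noncomputable def ptrFst {α β : Type*} [Fintype α] (M : Matrix (α × β) (α × β) ℂ) :
    Matrix β β ℂ :=
  Matrix.of fun i j => ∑ a : α, M (a, i) (a, j)

/-- Partial trace over the second tensor factor. -/
noncomputable def ptrSnd {α β : Type*} [Fintype β] (M : Matrix (α × β) (α × β) ℂ) :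
    Matrix α α ℂ :=
  Matrix.of fun i j => ∑ b : β, M (i, b) (j, b)

/-!
For fixed `M` and `N`, left invariance of `μ` makes the second moment
`(B, C) ↦ ∫ Tr(B U M Uᴴ) Tr(C U N Uᴴ) dμ(U)` a conjugation-invariant bilinear form. Such a form is
a combination of `Tr B Tr C` and `Tr (B C)`: diagonal unitaries kill every other pair of matrix
units, permutations make the remaining values independent of the indices, and a square root of a
transposition relates the values on equal and on distinct indices. The two coefficients are fixed
by `B = C = 1` and by summing over the pairs `|i⟩⟨j|`, `|j⟩⟨i|`.

Expanding along matrix units of `R`, this averages `‖σ_X(U)‖₂²` to a combination of `‖X‖₂²` and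
`‖Tr_A X‖₂²`. The marginal `σ^R(U)` does not depend on `U`, so
`σ^{A₂R}(U) − σ^{A₂}(U) ⊗ σ^R(U) = σ_X(U)` for `X = ψ − ψ^A ⊗ ψ^R`, and `Tr_A X = 0` leaves only
the first term.
-/

open LinearMap (BilinForm)
open Unitary (conjStarAlgAut)

theorem trace_single_mul_trace_single {n R : Type*} [Fintype n] [DecidableEq n]
    [NonAssocSemiring R] (i j : n) :
    (single i j (1 : R)).trace * (single j i (1 : R)).trace = if i = j then 1 else 0 := by
  split_ifs with hij
  · rw [hij, trace_single_eq_same, mul_one]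
  · rw [trace_single_eq_of_ne i j _ hij, zero_mul]

section UnitaryConjugation

variable {n R : Type*} [Fintype n] [DecidableEq n] [CommRing R] [StarRing R]

theorem trace_conjStarAlgAut (U : unitaryGroup n R) (M : Matrix n n R) :
    (conjStarAlgAut R _ U M).trace = M.trace := by
  rw [Unitary.conjStarAlgAut_apply, trace_mul_cycle, Unitary.coe_star_mul_self, one_mul]

theorem diagonal_mem_unitaryGroup (z : n → unitary R) :
    diagonal (fun i => (z i : R)) ∈ unitaryGroup n R := by
  rw [mem_unitaryGroup_iff, star_eq_conjTranspose, diagonal_conjTranspose, diagonal_mul_diagonal,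
    ← diagonal_one]
  exact congrArg diagonal (funext fun i => Unitary.coe_mul_star_self (z i))

theorem diagonal_conj_single (z : n → unitary R) (i j : n) :
    conjStarAlgAut R _ ⟨_, diagonal_mem_unitaryGroup z⟩ (single i j 1) =
      (z i * star (z j) : R) • single i j 1 := by
  ext a b
  simp only [Unitary.conjStarAlgAut_apply, star_eq_conjTranspose, diagonal_conjTranspose,
    diagonal_mul, mul_diagonal, single_apply, Matrix.smul_apply, smul_eq_mul, Pi.star_apply]
  aesop

theorem permMatrix_mem_unitaryGroup (σ : Equiv.Perm n) :
    σ.permMatrix R ∈ unitaryGroup n R := by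
  rw [mem_unitaryGroup_iff, star_eq_conjTranspose, conjTranspose_permMatrix, ← permMatrix_mul,
    inv_mul_cancel, permMatrix_one]

theorem permMatrix_conj_single (σ : Equiv.Perm n) (i j : n) :
    conjStarAlgAut R _ ⟨σ.permMatrix R, permMatrix_mem_unitaryGroup σ⟩ (single i j 1) =
      single (σ⁻¹ i) (σ⁻¹ j) 1 := by
  rw [Unitary.conjStarAlgAut_apply, star_eq_conjTranspose, conjTranspose_permMatrix,
    PEquiv.toMatrix_toPEquiv_mul, PEquiv.mul_toMatrix_toPEquiv, submatrix_submatrix]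
  exact submatrix_single_equiv σ σ i j 1

theorem exists_unitary_conj_eq_of_involution {A : Type*} [Ring A] [StarRing A] [Algebra ℂ A]
    [StarModule ℂ A] {S : A} (hS : IsSelfAdjoint S) (hSq : S * S = 1) :
    ∃ V : unitary A, ∀ Y, conjStarAlgAut ℂ A V Y =
      (1 / 2 : ℂ) • (Y + S * Y * S) + (Complex.I / 2) • (Y * S - S * Y) := by
  -- The square root of `S` whose eigenvalues are `1` and `Complex.I`.
  let V : A := ((1 + Complex.I) / 2) • 1 + ((1 - Complex.I) / 2) • S
  have hVstar : star V = ((1 - Complex.I) / 2) • 1 + ((1 + Complex.I) / 2) • S := by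
    simp [V, star_smul, hS.star_eq, sub_eq_add_neg]
  have hconj (Y : A) : V * Y * star V =
      (1 / 2 : ℂ) • (Y + S * Y * S) + (Complex.I / 2) • (Y * S - S * Y) := by
    rw [hVstar]
    simp only [V, add_mul, mul_add, smul_mul_assoc, mul_smul_comm, one_mul, mul_one]
    match_scalars <;> ring_nf <;> simp only [Complex.I_sq] <;> ring
  have hunitary : V ∈ unitary A := by
    rw [Unitary.mem_iff, hVstar]
    constructor <;>
    · simp only [V, add_mul, mul_add, smul_mul_assoc, mul_smul_comm, one_mul, mul_one, hSq]
      match_scalars <;> ring_nf <;> simp only [Complex.I_sq] <;> ring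
  exact ⟨⟨V, hunitary⟩, hconj⟩

theorem exists_unitary_conj_single_eq (p q : n) :
    ∃ V : unitaryGroup n ℂ, conjStarAlgAut ℂ _ V (single p p 1) =
      (1 / 2 : ℂ) • (single p p 1 + single q q 1) +
        (Complex.I / 2) • (single p q 1 - single q p 1) := by
  have hS : IsSelfAdjoint ((Equiv.swap p q).permMatrix ℂ) := by
    simp [IsSelfAdjoint, star_eq_conjTranspose]
  have hSq : (Equiv.swap p q).permMatrix ℂ * (Equiv.swap p q).permMatrix ℂ = 1 := by
    simp [← permMatrix_mul]
  have hleft (i j : n) : (single i j (1 : ℂ)).submatrix (Equiv.swap p q) id =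
      single (Equiv.swap p q i) j 1 := by
    simpa using submatrix_single_equiv (Equiv.swap p q) (Equiv.refl n) i j (1 : ℂ)
  have hright (i j : n) : (single i j (1 : ℂ)).submatrix id (Equiv.swap p q) =
      single i (Equiv.swap p q j) 1 := by
    simpa using submatrix_single_equiv (Equiv.refl n) (Equiv.swap p q) i j (1 : ℂ)
  obtain ⟨V, hV⟩ := exists_unitary_conj_eq_of_involution hS hSq
  refine ⟨V, (hV _).trans ?_⟩
  simp only [PEquiv.toMatrix_toPEquiv_mul, PEquiv.mul_toMatrix_toPEquiv, Equiv.symm_swap,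
    hleft, hright, Equiv.swap_apply_left]

end UnitaryConjugation

section InvariantForms

variable {n : Type*} [Fintype n] [DecidableEq n]

/-- Invariance of a bilinear form on matrices under simultaneous unitary conjugation of both
arguments, the symmetry of the second moment of a Haar-random conjugation. -/
def IsConjInvariant (G : BilinForm ℂ (Matrix n n ℂ)) : Prop :=
  ∀ (V : unitaryGroup n ℂ) (B C : Matrix n n ℂ),
    G (conjStarAlgAut ℂ _ V B) (conjStarAlgAut ℂ _ V C) = G B C

namespace IsConjInvariant

variable {G : BilinForm ℂ (Matrix n n ℂ)}

theorem apply_single_eq_phase_mul (hG : IsConjInvariant G) (z : n → unitary ℂ) (i j k l : n) :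
    G (single i j 1) (single k l 1) =
      (z i * star (z j) * (z k * star (z l)) : ℂ) * G (single i j 1) (single k l 1) := by
  conv_lhs => rw [← hG ⟨_, diagonal_mem_unitaryGroup z⟩, diagonal_conj_single,
    diagonal_conj_single]
  simp only [map_smul, LinearMap.smul_apply, smul_eq_mul]
  ring

theorem apply_single_eq_zero (hG : IsConjInvariant G) {i j k l : n}
    (hij : ¬(i = j ∧ k = l)) (hil : ¬(i = l ∧ j = k)) :
    G (single i j 1) (single k l 1) = 0 := by
  suffices ∃ z : n → unitary ℂ, (z i * star (z j) * (z k * star (z l)) : ℂ) ≠ 1 by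
    obtain ⟨z, hz⟩ := this
    by_contra hne
    exact hz (mul_eq_right₀ hne |>.1 (hG.apply_single_eq_phase_mul z i j k l).symm)
  let phase (p : n) : n → unitary ℂ :=
    Pi.mulSingle p ⟨Complex.I, by simp [Unitary.mem_iff]⟩
  have hI : Complex.I ≠ 1 := fun h => by simpa using congrArg Complex.re h
  have hII : Complex.I * Complex.I ≠ 1 := by norm_num
  have hself (p a : n) : (phase p a * star (phase p a) : ℂ) = 1 :=
    Unitary.coe_mul_star_self _
  rcases eq_or_ne i j with rfl | hne
  · have hkl : k ≠ l := fun h => hij ⟨rfl, h⟩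
    refine ⟨phase k, ?_⟩
    rw [hself]
    simpa [phase, hkl.symm] using hI
  rcases eq_or_ne i l with rfl | hne'
  · have hjk : j ≠ k := fun h => hil ⟨rfl, h⟩
    refine ⟨phase k, ?_⟩
    have hregroup (u v w x : ℂ) : u * v * (w * x) = u * x * (v * w) := by ring
    rw [hregroup, hself]
    simpa [phase, hjk] using hI
  · refine ⟨phase i, ?_⟩
    rcases eq_or_ne k i with rfl | hki
    · simpa [phase, hne.symm, hne'.symm] using hII
    · simpa [phase, hne.symm, hne'.symm, hki] using hI

theorem apply_single_perm (hG : IsConjInvariant G) (σ : Equiv.Perm n) (i j k l : n) :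
    G (single (σ i) (σ j) 1) (single (σ k) (σ l) 1) = G (single i j 1) (single k l 1) := by
  rw [← hG ⟨_, permMatrix_mem_unitaryGroup σ⁻¹⟩ (single i j 1), permMatrix_conj_single,
    permMatrix_conj_single, inv_inv]

theorem apply_single_self (hG : IsConjInvariant G) {p q : n} (hpq : p ≠ q) :
    G (single p p 1) (single p p 1) =
      G (single p p 1) (single q q 1) + G (single p q 1) (single q p 1) := by
  have hzero (i j k l : n) := hG.apply_single_eq_zero (i := i) (j := j) (k := k) (l := l)
  have hswap (i j k l : n) := hG.apply_single_perm (Equiv.swap p q) i j k l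
  have hpppp := hswap p p p p
  have hppqq := hswap p p q q
  have hpqqp := hswap p q q p
  simp only [Equiv.swap_apply_left, Equiv.swap_apply_right] at hpppp hppqq hpqqp
  obtain ⟨V, hV⟩ := exists_unitary_conj_single_eq p q
  have hinv := hG V (single p p 1) (single p p 1)
  simp only [hV, map_add, map_sub, map_smul, LinearMap.add_apply, LinearMap.sub_apply,
    LinearMap.smul_apply, smul_eq_mul] at hinv
  rw [hzero p p p q, hzero p p q p, hzero q q p q, hzero q q q p, hzero p q p p,
    hzero p q q q, hzero q p p p, hzero q p q q, hzero p q p q, hzero q p q p,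
    hpppp, hppqq, hpqqp] at hinv
  · linear_combination -2 * hinv - G (single p q 1) (single q p 1) * Complex.I_sq
  all_goals simp [hpq, hpq.symm]

theorem apply_single_of_ne (hG : IsConjInvariant G) {p q i j : n} (hpq : p ≠ q) (hij : i ≠ j) :
    G (single i i 1) (single j j 1) = G (single p p 1) (single q q 1) ∧
      G (single i j 1) (single j i 1) = G (single p q 1) (single q p 1) := by
  obtain ⟨σ, rfl, rfl⟩ := MulAction.is_two_pretransitive_iff.1
    (Equiv.Perm.isMultiplyPretransitive n 2) hpq hij
  exact ⟨hG.apply_single_perm σ p p q q, hG.apply_single_perm σ p q q p⟩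

theorem exists_eq_trace [Nontrivial n] (hG : IsConjInvariant G) :
    ∃ b c : ℂ, ∀ B C, G B C = b * (B.trace * C.trace) + c * (B * C).trace := by
  obtain ⟨p, q, hpq⟩ := exists_pair_ne n
  let b := G (single p p 1) (single q q 1)
  let c := G (single p q 1) (single q p 1)
  have hdistinct {i j : n} (hij : i ≠ j) : G (single i i 1) (single j j 1) = b ∧
      G (single i j 1) (single j i 1) = c :=
    hG.apply_single_of_ne hpq hij
  have hdiag (i : n) : G (single i i 1) (single i i 1) = b + c := by
    obtain ⟨j, hji⟩ := exists_ne i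
    rw [hG.apply_single_self hji.symm, (hdistinct hji.symm).1, (hdistinct hji.symm).2]
  let traceMap := traceLinearMap n ℂ ℂ
  let T : BilinForm ℂ (Matrix n n ℂ) :=
    b • (LinearMap.mul ℂ ℂ).compl₁₂ traceMap traceMap +
      c • (LinearMap.mul ℂ (Matrix n n ℂ)).compr₂ traceMap
  suffices G = T from ⟨b, c, fun B C => by rw [this]; rfl⟩
  refine LinearMap.BilinForm.ext_basis (stdBasis ℂ n n) ?_
  rintro ⟨i, j⟩ ⟨k, l⟩
  have hT (B C : Matrix n n ℂ) : T B C = b * (B.trace * C.trace) + c * (B * C).trace := rfl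
  rw [stdBasis_eq_single, stdBasis_eq_single, hT, trace_single_mul]
  by_cases hijkl : i = j ∧ k = l
  · obtain ⟨rfl, rfl⟩ := hijkl
    rcases eq_or_ne i k with rfl | hik
    · simp [hdiag]
    · simp [hdistinct hik, hik.symm]
  by_cases hiljk : i = l ∧ j = k
  · obtain ⟨rfl, rfl⟩ := hiljk
    have hij : i ≠ j := fun h => hijkl ⟨h, h.symm⟩
    simp [hdistinct hij, hij]
  · rw [hG.apply_single_eq_zero hijkl hiljk]
    have hoff : b * ((single i j (1 : ℂ)).trace * (single k l (1 : ℂ)).trace) = 0 := by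
      rcases not_and_or.1 hijkl with h | h <;> simp [h]
    have hcross : single k l (1 : ℂ) j i = 0 := by
      rcases not_and_or.1 hiljk with h | h <;> simp [Ne.symm h]
    rw [hoff, hcross, smul_zero, mul_zero, add_zero]

end IsConjInvariant

end InvariantForms

section HaarAverage

instance borelSpace_matrix {m n : Type*} [Finite m] [Finite n] : BorelSpace (Matrix m n ℂ) :=
  inferInstanceAs (BorelSpace (m → n → ℂ))

variable {n : Type*} [Fintype n] [DecidableEq n]

instance compactSpace_unitaryGroup : CompactSpace (unitaryGroup n ℂ) := by
  have hbounded : IsCompact {U : Matrix n n ℂ | ∀ i j, U i j ∈ Metric.closedBall 0 1} :=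
    isCompact_pi_infinite fun _ => isCompact_pi_infinite fun _ => isCompact_closedBall 0 1
  refine isCompact_iff_compactSpace.1 (hbounded.of_isClosed_subset isClosed_unitary ?_)
  exact fun U hU i j => mem_closedBall_zero_iff.2 (entry_norm_bound_of_unitary hU i j)

variable {μ : Measure (unitaryGroup n ℂ)}

theorem integrable_of_continuous_unitaryGroup [IsFiniteMeasure μ] {E : Type*}
    [NormedAddCommGroup E] {f : unitaryGroup n ℂ → E} (hf : Continuous f) : Integrable f μ :=
  hf.integrable_of_hasCompactSupport (.of_compactSpace f)

theorem integral_trace_mul_of_continuous [IsFiniteMeasure μ] {l m : Type*} [Fintype l] [Fintype m]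
    {F : unitaryGroup n ℂ → Matrix l m ℂ} {G : unitaryGroup n ℂ → Matrix m l ℂ}
    (hF : Continuous F) (hG : Continuous G) :
    ∫ U, (F U * G U).trace ∂μ = ∑ i, ∑ j, ∫ U, F U i j * G U j i ∂μ := by
  have hint (i : l) (j : m) : Integrable (fun U => F U i j * G U j i) μ :=
    integrable_of_continuous_unitaryGroup ((hF.matrix_elem i j).mul (hG.matrix_elem j i))
  rw [← Finset.sum_congr rfl fun i _ => integral_finsetSum _ fun j _ => hint i j]
  exact integral_finsetSum _ fun i _ => integrable_finsetSum _ fun j _ => hint i j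

theorem continuous_conjStarAlgAut (M : Matrix n n ℂ) :
    Continuous fun U : unitaryGroup n ℂ => conjStarAlgAut ℂ _ U M := by
  simp only [Unitary.conjStarAlgAut_apply]
  fun_prop

/-- The second moment of the matrix coefficients of conjugation by a random unitary, as a
bilinear form in the two test matrices. -/
noncomputable def conjMoment (μ : Measure (unitaryGroup n ℂ)) [IsFiniteMeasure μ]
    (M N : Matrix n n ℂ) : BilinForm ℂ (Matrix n n ℂ) :=
  have hint (B C : Matrix n n ℂ) : Integrable (fun U : unitaryGroup n ℂ =>
      (B * conjStarAlgAut ℂ _ U M).trace * (C * conjStarAlgAut ℂ _ U N).trace) μ := by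
    have hM := continuous_conjStarAlgAut M
    have hN := continuous_conjStarAlgAut N
    exact integrable_of_continuous_unitaryGroup (by fun_prop)
  LinearMap.mk₂ ℂ
    (fun B C => ∫ U : unitaryGroup n ℂ,
      (B * conjStarAlgAut ℂ _ U M).trace * (C * conjStarAlgAut ℂ _ U N).trace ∂μ)
    (fun B₁ B₂ C => by
      simp only [add_mul, trace_add]; exact integral_add (hint B₁ C) (hint B₂ C))
    (fun c B C => by
      simp only [smul_mul_assoc, trace_smul]; exact integral_smul c _)
    (fun B C₁ C₂ => by
      simp only [add_mul, mul_add, trace_add]; exact integral_add (hint B C₁) (hint B C₂))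
    (fun c B C => by
      simp only [smul_mul_assoc, mul_smul_comm, trace_smul]; exact integral_smul c _)

theorem conjMoment_apply [IsFiniteMeasure μ] (M N B C : Matrix n n ℂ) :
    conjMoment μ M N B C = ∫ U : unitaryGroup n ℂ,
      (B * conjStarAlgAut ℂ _ U M).trace * (C * conjStarAlgAut ℂ _ U N).trace ∂μ :=
  rfl

theorem isConjInvariant_conjMoment [IsFiniteMeasure μ] [μ.IsMulLeftInvariant]
    (M N : Matrix n n ℂ) : IsConjInvariant (conjMoment μ M N) := by
  intro V B C
  have hmove (U : unitaryGroup n ℂ) (B M : Matrix n n ℂ) :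
      (conjStarAlgAut ℂ _ V B * conjStarAlgAut ℂ _ U M).trace =
        (B * conjStarAlgAut ℂ _ (V⁻¹ * U) M).trace := by
    rw [← trace_conjStarAlgAut V (B * _), map_mul, ← Unitary.conjStarAlgAut_mul_apply,
      mul_inv_cancel_left]
  simp only [conjMoment_apply, hmove]
  exact integral_mul_left_eq_self (fun U : unitaryGroup n ℂ =>
    (B * conjStarAlgAut ℂ _ U M).trace * (C * conjStarAlgAut ℂ _ U N).trace) V⁻¹

theorem conjMoment_one_one [IsProbabilityMeasure μ] (M N : Matrix n n ℂ) :
    conjMoment μ M N 1 1 = M.trace * N.trace := by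
  simp only [conjMoment_apply, one_mul, trace_conjStarAlgAut, integral_const, probReal_univ,
    one_smul]

theorem sum_conjMoment_single_single [IsProbabilityMeasure μ] (M N : Matrix n n ℂ) :
    ∑ i, ∑ j, conjMoment μ M N (single i j 1) (single j i 1) = (M * N).trace := by
  calc
    _ = ∑ j, ∑ i, ∫ U : unitaryGroup n ℂ,
        conjStarAlgAut ℂ _ U M j i * conjStarAlgAut ℂ _ U N i j ∂μ := by
      simp only [conjMoment_apply, trace_single_mul, one_smul]
      exact Finset.sum_comm
    _ = ∫ U : unitaryGroup n ℂ, (conjStarAlgAut ℂ _ U (M * N)).trace ∂μ := by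
      simp only [map_mul]
      exact (integral_trace_mul_of_continuous (continuous_conjStarAlgAut M)
        (continuous_conjStarAlgAut N)).symm
    _ = (M * N).trace := by
      simp only [trace_conjStarAlgAut, integral_const, probReal_univ, one_smul]

theorem integral_trace_mul_trace [Nontrivial n] [IsProbabilityMeasure μ] [μ.IsMulLeftInvariant]
    (M N B C : Matrix n n ℂ) :
    ∫ U : unitaryGroup n ℂ,
        (B * conjStarAlgAut ℂ _ U M).trace * (C * conjStarAlgAut ℂ _ U N).trace ∂μ =
      ((M.trace * N.trace - (M * N).trace / Fintype.card n) * (B.trace * C.trace) +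
        ((M * N).trace - M.trace * N.trace / Fintype.card n) * (B * C).trace) /
          ((Fintype.card n : ℂ) ^ 2 - 1) := by
  obtain ⟨b, c, hbc⟩ := (isConjInvariant_conjMoment (μ := μ) M N).exists_eq_trace
  have hd : (Fintype.card n : ℂ) ≠ 0 := by simp
  have hd2 : (Fintype.card n : ℂ) ^ 2 - 1 ≠ 0 := by
    rw [sub_ne_zero]
    exact_mod_cast (Nat.one_lt_pow two_ne_zero Fintype.one_lt_card).ne'
  have hone := conjMoment_one_one (μ := μ) M N
  have hsum := sum_conjMoment_single_single (μ := μ) M N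
  simp only [hbc, trace_one, mul_one] at hone
  simp only [hbc, trace_single_mul_trace_single, single_mul_single_same, trace_single_eq_same,
    mul_one, mul_ite, mul_zero, Finset.sum_add_distrib, Finset.sum_ite_eq, Finset.mem_univ,
    if_true, Finset.sum_const, Finset.card_univ, nsmul_eq_mul] at hsum
  rw [← conjMoment_apply, hbc, ← hone, ← hsum]
  field_simp
  ring

end HaarAverage

section HilbertSchmidt

variable {m n : Type*} [Fintype m] [Fintype n]

theorem ofReal_hsNormSq (M : Matrix n n ℂ) : (hsNormSq M : ℂ) = (Mᴴ * M).trace :=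
  (Complex.eq_re_of_ofReal_le (posSemidef_conjTranspose_mul_self M).trace_nonneg).symm

theorem hsNormSq_zero : hsNormSq (0 : Matrix n n ℂ) = 0 := by
  simp [hsNormSq]

theorem hsNormSq_of_isHermitian {M : Matrix n n ℂ} (hM : M.IsHermitian) :
    hsNormSq M = (M * M).trace.re := by
  rw [hsNormSq, hM.eq]

theorem hsNormSq_sub (M N : Matrix n n ℂ) :
    hsNormSq (M - N) = hsNormSq M - 2 * (Mᴴ * N).trace.re + hsNormSq N := by
  have hcross : (Nᴴ * M).trace.re = (Mᴴ * N).trace.re := by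
    rw [← Complex.conj_re, starRingEnd_apply, ← trace_conjTranspose, conjTranspose_mul,
      conjTranspose_conjTranspose]
  simp only [hsNormSq, conjTranspose_sub, sub_mul, mul_sub, trace_sub, Complex.sub_re, hcross]
  ring

theorem hsNormSq_kronecker (M : Matrix m m ℂ) (N : Matrix n n ℂ) :
    hsNormSq (M ⊗ₖ N) = hsNormSq M * hsNormSq N := by
  apply Complex.ofReal_injective
  rw [Complex.ofReal_mul, ofReal_hsNormSq, ofReal_hsNormSq, ofReal_hsNormSq,
    conjTranspose_kronecker, ← mul_kronecker_mul, trace_kronecker]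

end HilbertSchmidt

section PartialTrace

variable {α β : Type*}

theorem ptrFst_sub [Fintype α] (M N : Matrix (α × β) (α × β) ℂ) :
    ptrFst (M - N) = ptrFst M - ptrFst N := by
  ext i j
  simp [ptrFst]

theorem ptrFst_sum [Fintype α] {κ : Type*} (s : Finset κ) (M : κ → Matrix (α × β) (α × β) ℂ) :
    ptrFst (∑ k ∈ s, M k) = ∑ k ∈ s, ptrFst (M k) := by
  ext i j
  simp only [ptrFst, of_apply, Matrix.sum_apply]
  exact Finset.sum_comm

theorem ptrFst_kronecker [Fintype α] (M : Matrix α α ℂ) (N : Matrix β β ℂ) :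
    ptrFst (M ⊗ₖ N) = M.trace • N := by
  ext i j
  simp [ptrFst, trace, Finset.sum_mul]

theorem conjTranspose_ptrFst [Fintype α] (M : Matrix (α × β) (α × β) ℂ) :
    (ptrFst M)ᴴ = ptrFst Mᴴ := by
  ext i j
  simp [ptrFst]

theorem conjTranspose_ptrSnd [Fintype β] (M : Matrix (α × β) (α × β) ℂ) :
    (ptrSnd M)ᴴ = ptrSnd Mᴴ := by
  ext i j
  simp [ptrSnd]

variable [Fintype α] [Fintype β]

theorem trace_ptrFst (M : Matrix (α × β) (α × β) ℂ) : (ptrFst M).trace = M.trace :=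
  (Fintype.sum_prod_type_right fun k => M k k).symm

theorem trace_ptrSnd (M : Matrix (α × β) (α × β) ℂ) : (ptrSnd M).trace = M.trace :=
  (Fintype.sum_prod_type fun k => M k k).symm

theorem ptrFst_sub_kronecker_marginals {M : Matrix (α × β) (α × β) ℂ} (hM : M.trace = 1) :
    ptrFst (M - ptrSnd M ⊗ₖ ptrFst M) = 0 := by
  rw [ptrFst_sub, ptrFst_kronecker, trace_ptrSnd, hM, one_smul, sub_self]

theorem hsNormSq_sub_kronecker_marginals {M : Matrix (α × β) (α × β) ℂ} (hM : M.IsHermitian) :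
    hsNormSq (M - ptrSnd M ⊗ₖ ptrFst M) =
      (M * M).trace.re - 2 * (M * (ptrSnd M ⊗ₖ ptrFst M)).trace.re +
        (ptrSnd M * ptrSnd M).trace.re * (ptrFst M * ptrFst M).trace.re := by
  have hFst : (ptrFst M).IsHermitian := by rw [IsHermitian, conjTranspose_ptrFst, hM.eq]
  have hSnd : (ptrSnd M).IsHermitian := by rw [IsHermitian, conjTranspose_ptrSnd, hM.eq]
  rw [hsNormSq_sub, hsNormSq_kronecker, hsNormSq_of_isHermitian hM,
    hsNormSq_of_isHermitian hFst, hsNormSq_of_isHermitian hSnd, hM.eq]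

variable [DecidableEq α]

theorem trace_one_kronecker_mul (N : Matrix β β ℂ) (M : Matrix (α × β) (α × β) ℂ) :
    ((1 ⊗ₖ N) * M).trace = (N * ptrFst M).trace := by
  simp only [trace, diag_apply, mul_apply, Fintype.sum_prod_type, kroneckerMap_apply, one_apply,
    ite_mul, one_mul, zero_mul, Finset.sum_ite_irrel, Finset.sum_const_zero, Finset.sum_ite_eq,
    Finset.mem_univ, if_true, ptrFst, of_apply, Finset.mul_sum]
  rw [Finset.sum_comm]
  exact Finset.sum_congr rfl fun _ _ => Finset.sum_comm

variable [DecidableEq β]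

theorem continuous_ptrFst_conjStarAlgAut (M : Matrix (α × β) (α × β) ℂ) :
    Continuous fun U : unitaryGroup (α × β) ℂ => ptrFst (conjStarAlgAut ℂ _ U M) :=
  continuous_matrix fun _ _ => continuous_finsetSum _ fun _ _ =>
    (continuous_conjStarAlgAut M).matrix_elem _ _

theorem ptrFst_apply_eq_trace (M : Matrix (α × β) (α × β) ℂ) (i j : β) :
    ptrFst M i j = ((1 ⊗ₖ single j i 1) * M).trace := by
  rw [trace_one_kronecker_mul, trace_single_mul, one_smul]

theorem integral_trace_ptrFst_mul_ptrFst [Nontrivial (α × β)]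
    {μ : Measure (unitaryGroup (α × β) ℂ)} [IsProbabilityMeasure μ] [μ.IsMulLeftInvariant]
    (M N : Matrix (α × β) (α × β) ℂ) :
    ∫ U : unitaryGroup (α × β) ℂ,
        (ptrFst (conjStarAlgAut ℂ _ U M) * ptrFst (conjStarAlgAut ℂ _ U N)).trace ∂μ =
      (((Fintype.card α : ℂ) * (Fintype.card β : ℂ) ^ 2 - Fintype.card α) * (M * N).trace +
        ((Fintype.card α : ℂ) ^ 2 * (Fintype.card β : ℂ) - Fintype.card β) *
          (M.trace * N.trace)) /
        (((Fintype.card α : ℂ) * (Fintype.card β : ℂ)) ^ 2 - 1) := by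
  obtain ⟨_, _⟩ := nonempty_prod.1 (inferInstance : Nonempty (α × β))
  have hentry (i j : β) := integral_trace_mul_trace (μ := μ) M N (1 ⊗ₖ single j i 1)
    (1 ⊗ₖ single i j 1)
  simp only [← ptrFst_apply_eq_trace, ← mul_kronecker_mul, trace_kronecker, mul_mul_mul_comm,
    trace_single_mul_trace_single, single_mul_single_same, trace_single_eq_same, mul_one,
    trace_one, mul_ite, mul_zero, Fintype.card_prod, Nat.cast_mul] at hentry
  rw [integral_trace_mul_of_continuous (continuous_ptrFst_conjStarAlgAut M)
    (continuous_ptrFst_conjStarAlgAut N)]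
  simp only [hentry, ← Finset.sum_div, Finset.sum_add_distrib,
    Finset.sum_ite_eq', Finset.mem_univ, if_true, Finset.sum_const, Finset.card_univ, nsmul_eq_mul]
  congr 1
  field_simp
  ring

end PartialTrace

section Blocks

variable {α β R : Type*}

/-- The block `(I ⊗ ⟨r|) X (I ⊗ |s⟩)` of an operator `X` on a tensor product, so that
`X = ∑ r s, sndBlock X r s ⊗ |r⟩⟨s|`. -/
def sndBlock (X : Matrix (α × β) (α × β) R) (r s : β) : Matrix α α R :=
  X.submatrix (·, r) (·, s)

theorem ptrSnd_eq_sum_sndBlock [Fintype β] (X : Matrix (α × β) (α × β) ℂ) :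
    ptrSnd X = ∑ r, sndBlock X r r := by
  ext i j
  simp [ptrSnd, sndBlock, Matrix.sum_apply]

theorem ptrFst_apply_eq_trace_sndBlock [Fintype α] (X : Matrix (α × β) (α × β) ℂ) (r s : β) :
    ptrFst X r s = (sndBlock X r s).trace :=
  rfl

theorem trace_mul_eq_sum_sndBlock [Fintype α] [Fintype β] [NonUnitalNonAssocSemiring R]
    (X Y : Matrix (α × β) (α × β) R) :
    (X * Y).trace = ∑ r, ∑ s, (sndBlock X r s * sndBlock Y s r).trace := by
  simp only [trace, diag_apply, mul_apply, Fintype.sum_prod_type_right, sndBlock, submatrix_apply]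
  exact Finset.sum_congr rfl fun _ _ => Finset.sum_comm

theorem sndBlock_conj_kronecker_one [Fintype α] [Fintype β] [DecidableEq β]
    [CommSemiring R] [StarRing R] (U : Matrix α α R) (X : Matrix (α × β) (α × β) R) (r s : β) :
    sndBlock ((U ⊗ₖ 1) * X * (U ⊗ₖ 1)ᴴ) r s = U * sndBlock X r s * Uᴴ := by
  ext i j
  simp [sndBlock, mul_apply, Fintype.sum_prod_type, one_apply, conjTranspose_kronecker]

end Blocks

section Decoupling

variable {ιA₁ ιA₂ ιR : Type} [Fintype ιA₁] [Fintype ιA₂] [Fintype ιR] [DecidableEq ιR]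

theorem sigmaA2R_sub (X Y : Matrix ((ιA₁ × ιA₂) × ιR) ((ιA₁ × ιA₂) × ιR) ℂ)
    (U : Matrix (ιA₁ × ιA₂) (ιA₁ × ιA₂) ℂ) :
    sigmaA2R (X - Y) U = sigmaA2R X U - sigmaA2R Y U := by
  ext i j
  simp [sigmaA2R, mul_sub, sub_mul]

theorem conjTranspose_sigmaA2R (X : Matrix ((ιA₁ × ιA₂) × ιR) ((ιA₁ × ιA₂) × ιR) ℂ)
    (U : Matrix (ιA₁ × ιA₂) (ιA₁ × ιA₂) ℂ) :
    (sigmaA2R X U)ᴴ = sigmaA2R Xᴴ U := by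
  have hsandwich : (U ⊗ₖ (1 : Matrix ιR ιR ℂ)) * Xᴴ * (U ⊗ₖ (1 : Matrix ιR ιR ℂ))ᴴ =
      ((U ⊗ₖ (1 : Matrix ιR ιR ℂ)) * X * (U ⊗ₖ (1 : Matrix ιR ιR ℂ))ᴴ)ᴴ := by
    simp only [conjTranspose_mul, conjTranspose_conjTranspose, mul_assoc]
  ext i j
  rw [sigmaA2R, sigmaA2R, hsandwich]
  simp only [conjTranspose_apply, of_apply, star_sum]

variable [DecidableEq ιA₁] [DecidableEq ιA₂]

theorem sndBlock_sigmaA2R (X : Matrix ((ιA₁ × ιA₂) × ιR) ((ιA₁ × ιA₂) × ιR) ℂ)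
    (U : unitaryGroup (ιA₁ × ιA₂) ℂ) (r s : ιR) :
    sndBlock (sigmaA2R X U) r s = ptrFst (conjStarAlgAut ℂ _ U (sndBlock X r s)) := by
  rw [Unitary.conjStarAlgAut_apply, star_eq_conjTranspose, ← sndBlock_conj_kronecker_one]
  rfl

theorem sigmaA2R_kronecker (M : Matrix (ιA₁ × ιA₂) (ιA₁ × ιA₂) ℂ) (N : Matrix ιR ιR ℂ)
    (U : unitaryGroup (ιA₁ × ιA₂) ℂ) :
    sigmaA2R (M ⊗ₖ N) U = ptrFst (conjStarAlgAut ℂ _ U M) ⊗ₖ N := by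
  ext i j
  simp only [sigmaA2R, conjTranspose_kronecker, ← mul_kronecker_mul, conjTranspose_one, one_mul,
    mul_one, of_apply, kroneckerMap_apply, ptrFst, Unitary.conjStarAlgAut_apply,
    star_eq_conjTranspose, Finset.sum_mul]

theorem ptrFst_sigmaA2R (X : Matrix ((ιA₁ × ιA₂) × ιR) ((ιA₁ × ιA₂) × ιR) ℂ)
    (U : unitaryGroup (ιA₁ × ιA₂) ℂ) :
    ptrFst (sigmaA2R X U) = ptrFst X := by
  ext r s
  rw [ptrFst_apply_eq_trace_sndBlock, sndBlock_sigmaA2R, trace_ptrFst, trace_conjStarAlgAut,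
    ptrFst_apply_eq_trace_sndBlock]

theorem ptrSnd_sigmaA2R (X : Matrix ((ιA₁ × ιA₂) × ιR) ((ιA₁ × ιA₂) × ιR) ℂ)
    (U : unitaryGroup (ιA₁ × ιA₂) ℂ) :
    ptrSnd (sigmaA2R X U) = ptrFst (conjStarAlgAut ℂ _ U (ptrSnd X)) := by
  simp only [ptrSnd_eq_sum_sndBlock, sndBlock_sigmaA2R, map_sum, ptrFst_sum]

theorem sigmaA2R_sub_kronecker_marginals
    (X : Matrix ((ιA₁ × ιA₂) × ιR) ((ιA₁ × ιA₂) × ιR) ℂ) (U : unitaryGroup (ιA₁ × ιA₂) ℂ) :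
    sigmaA2R X U - ptrSnd (sigmaA2R X U) ⊗ₖ ptrFst (sigmaA2R X U) =
      sigmaA2R (X - ptrSnd X ⊗ₖ ptrFst X) U := by
  rw [sigmaA2R_sub, sigmaA2R_kronecker, ptrSnd_sigmaA2R, ptrFst_sigmaA2R]

variable {μ : Measure (unitaryGroup (ιA₁ × ιA₂) ℂ)} [IsProbabilityMeasure μ]
  [μ.IsMulLeftInvariant] [Nontrivial (ιA₁ × ιA₂)]

theorem integral_trace_sigmaA2R_mul_sigmaA2R
    (X Y : Matrix ((ιA₁ × ιA₂) × ιR) ((ιA₁ × ιA₂) × ιR) ℂ) :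
    ∫ U : unitaryGroup (ιA₁ × ιA₂) ℂ, (sigmaA2R X U * sigmaA2R Y U).trace ∂μ =
      (((Fintype.card ιA₁ : ℂ) * (Fintype.card ιA₂ : ℂ) ^ 2 - Fintype.card ιA₁) *
          (X * Y).trace +
        ((Fintype.card ιA₁ : ℂ) ^ 2 * (Fintype.card ιA₂ : ℂ) - Fintype.card ιA₂) *
          (ptrFst X * ptrFst Y).trace) /
        (((Fintype.card ιA₁ : ℂ) * (Fintype.card ιA₂ : ℂ)) ^ 2 - 1) := by
  have hint (r s : ιR) : Integrable (fun U : unitaryGroup (ιA₁ × ιA₂) ℂ =>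
      (ptrFst (conjStarAlgAut ℂ _ U (sndBlock X r s)) *
        ptrFst (conjStarAlgAut ℂ _ U (sndBlock Y s r))).trace) μ :=
    integrable_of_continuous_unitaryGroup <| Continuous.matrix_trace <|
      (continuous_ptrFst_conjStarAlgAut _).matrix_mul (continuous_ptrFst_conjStarAlgAut _)
  have hmarginal : (ptrFst X * ptrFst Y).trace =
      ∑ r, ∑ s, (sndBlock X r s).trace * (sndBlock Y s r).trace :=
    rfl
  simp only [trace_mul_eq_sum_sndBlock (sigmaA2R X _), sndBlock_sigmaA2R]
  rw [integral_finsetSum _ fun r _ => integrable_finsetSum _ fun s _ => hint r s,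
    Finset.sum_congr rfl fun r _ => integral_finsetSum _ fun s _ => hint r s, hmarginal,
    trace_mul_eq_sum_sndBlock X]
  simp only [integral_trace_ptrFst_mul_ptrFst, ← Finset.sum_div, Finset.sum_add_distrib,
    Finset.mul_sum]

theorem integral_hsNormSq_sigmaA2R (X : Matrix ((ιA₁ × ιA₂) × ιR) ((ιA₁ × ιA₂) × ιR) ℂ) :
    ∫ U : unitaryGroup (ιA₁ × ιA₂) ℂ, hsNormSq (sigmaA2R X U) ∂μ =
      (((Fintype.card ιA₁ : ℝ) * (Fintype.card ιA₂ : ℝ) ^ 2 - Fintype.card ιA₁) * hsNormSq X +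
        ((Fintype.card ιA₁ : ℝ) ^ 2 * (Fintype.card ιA₂ : ℝ) - Fintype.card ιA₂) *
          hsNormSq (ptrFst X)) /
        (((Fintype.card ιA₁ : ℝ) * (Fintype.card ιA₂ : ℝ)) ^ 2 - 1) := by
  apply Complex.ofReal_injective
  push_cast
  simp only [← integral_complex_ofReal, ofReal_hsNormSq, conjTranspose_sigmaA2R,
    integral_trace_sigmaA2R_mul_sigmaA2R, conjTranspose_ptrFst]

end Decoupling

theorem hs_decoupling_exact_general
    {ιA₁ ιA₂ ιR : Type} [Fintype ιA₁] [DecidableEq ιA₁] [Fintype ιA₂] [DecidableEq ιA₂]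
    [Fintype ιR] [DecidableEq ιR]
    (hdA : 2 ≤ Fintype.card ιA₁ * Fintype.card ιA₂)
    (ψ : Matrix ((ιA₁ × ιA₂) × ιR) ((ιA₁ × ιA₂) × ιR) ℂ)
    (hψ : ψ.IsHermitian) (hψtr : ψ.trace = 1)
    (μ : Measure (Matrix.unitaryGroup (ιA₁ × ιA₂) ℂ)) [IsProbabilityMeasure μ]
    (hμ : ∀ V : Matrix.unitaryGroup (ιA₁ × ιA₂) ℂ,
      μ.map (fun U : Matrix.unitaryGroup (ιA₁ × ιA₂) ℂ => V * U) = μ) :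
    (∫ U : Matrix.unitaryGroup (ιA₁ × ιA₂) ℂ,
        hsNormSq (sigmaA2R ψ (U : Matrix (ιA₁ × ιA₂) (ιA₁ × ιA₂) ℂ)
            - ptrSnd (sigmaA2R ψ U) ⊗ₖ ptrFst (sigmaA2R ψ U)) ∂μ)
      = (((Fintype.card ιA₁ : ℝ) * (Fintype.card ιA₂ : ℝ) ^ 2 - (Fintype.card ιA₁ : ℝ)) /
            (((Fintype.card ιA₁ : ℝ) * (Fintype.card ιA₂ : ℝ)) ^ 2 - 1))
        * ((ψ * ψ).trace.re
            - 2 * (ψ * (ptrSnd ψ ⊗ₖ ptrFst ψ)).trace.re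
            + ((ptrSnd ψ * ptrSnd ψ).trace.re) * ((ptrFst ψ * ptrFst ψ).trace.re)) := by
  have : μ.IsMulLeftInvariant := ⟨hμ⟩
  have : Nontrivial (ιA₁ × ιA₂) := Fintype.one_lt_card_iff_nontrivial.1 <| by
    rwa [Fintype.card_prod]
  simp only [sigmaA2R_sub_kronecker_marginals]
  rw [integral_hsNormSq_sigmaA2R, ptrFst_sub_kronecker_marginals hψtr,
    hsNormSq_sub_kronecker_marginals hψ, hsNormSq_zero, mul_zero, add_zero, mul_div_right_comm]

/-- **Lemma 4.** Exact Haar average of the squared Hilbert–Schmidt distance between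
`σ^{A₂R}(U)` and `σ^{A₂}(U) ⊗ σ^R(U)`:
it equals `((d_{A₁}d_{A₂}² − d_{A₁})/(d_A² − 1)) (Tr[(ψ^{AR})²] − 2Tr[ψ^{AR}(ψ^A⊗ψ^R)]
+ Tr[(ψ^A)²]Tr[(ψ^R)²])`. -/
theorem hs_decoupling_exact
    {ιA₁ ιA₂ ιR : Type} [Fintype ιA₁] [DecidableEq ιA₁] [Fintype ιA₂] [DecidableEq ιA₂]
    [Fintype ιR] [DecidableEq ιR]
    (hdA : 2 ≤ Fintype.card ιA₁ * Fintype.card ιA₂)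
    (ψ : Matrix ((ιA₁ × ιA₂) × ιR) ((ιA₁ × ιA₂) × ιR) ℂ)
    (hψ : ψ.PosSemidef) (hψtr : ψ.trace = 1)
    (μ : Measure (Matrix.unitaryGroup (ιA₁ × ιA₂) ℂ)) [IsProbabilityMeasure μ]
    (hμ : ∀ V : Matrix.unitaryGroup (ιA₁ × ιA₂) ℂ,
      μ.map (fun U : Matrix.unitaryGroup (ιA₁ × ιA₂) ℂ => V * U) = μ) :
    (∫ U : Matrix.unitaryGroup (ιA₁ × ιA₂) ℂ,
        hsNormSq (sigmaA2R ψ (U : Matrix (ιA₁ × ιA₂) (ιA₁ × ιA₂) ℂ)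
            - ptrSnd (sigmaA2R ψ U) ⊗ₖ ptrFst (sigmaA2R ψ U)) ∂μ)
      = (((Fintype.card ιA₁ : ℝ) * (Fintype.card ιA₂ : ℝ) ^ 2 - (Fintype.card ιA₁ : ℝ)) /
            (((Fintype.card ιA₁ : ℝ) * (Fintype.card ιA₂ : ℝ)) ^ 2 - 1))
        * ((ψ * ψ).trace.re
            - 2 * (ψ * (ptrSnd ψ ⊗ₖ ptrFst ψ)).trace.re
            + ((ptrSnd ψ * ptrSnd ψ).trace.re) * ((ptrFst ψ * ptrFst ψ).trace.re)) :=
  hs_decoupling_exact_general hdA ψ hψ.isHermitian hψtr μ hμ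
end
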